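/- arXiv:1808.08290 — 3 statements merged into one kernel-verified Lean document; each statement's English description precedes it below -/
import Mathlib

section
/- Let f₁, f₂ : [0,L] → ℝ be twice continuously differentiable solutions of (p f′)′ = q f on [0,L] whose modified Wronskian p(f₁f₂′ − f₂f₁′) is a nonzero constant. If a, b ∈ [0,L] with a < b are two zeros of f₁, then f₂ has a zero in the open interval (a,b); that is, the zeros of the two linearly independent real solutions alternate. -/
/-!
Since `(f / g)' = -W / g ^ 2`, where `W = f g' - g f'` is the Wronskian, Rolle's theorem applied to
`f / g` shows that `W` vanishes somewhere between two zeros of `f` unless `g` has a zero there.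
At a zero of `f` itself, a zero of `g` would make `W` vanish at that point.
-/

open Set

section Wronskian

variable {𝕜 : Type*} [NontriviallyNormedField 𝕜] {f g : 𝕜 → 𝕜} {x : 𝕜}

/-- The Wronskian `f g' - g f'` of two functions, which measures their linear independence.
Derivatives are taken with `deriv`, so it is meaningful only where both are differentiable. -/
noncomputable def wronskian (f g : 𝕜 → 𝕜) (x : 𝕜) : 𝕜 :=
  f x * deriv g x - g x * deriv f x

theorem right_ne_zero_of_wronskian_ne_zero (hW : wronskian f g x ≠ 0) (hfx : f x = 0) :
    g x ≠ 0 := fun hgx => hW (by simp [wronskian, hfx, hgx])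

theorem deriv_div_eq_neg_wronskian_div_sq (hf : DifferentiableAt 𝕜 f x)
    (hg : DifferentiableAt 𝕜 g x) (hgx : g x ≠ 0) :
    deriv (f / g) x = -wronskian f g x / g x ^ 2 := by
  rw [deriv_div hf hg hgx, wronskian]
  ring

theorem wronskian_eq_zero_of_deriv_div_eq_zero (hf : DifferentiableAt 𝕜 f x)
    (hg : DifferentiableAt 𝕜 g x) (hgx : g x ≠ 0) (h : deriv (f / g) x = 0) :
    wronskian f g x = 0 := by
  simpa [deriv_div_eq_neg_wronskian_div_sq hf hg hgx, hgx] using h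

end Wronskian

section Separation

variable {f g : ℝ → ℝ} {a b : ℝ}

theorem exists_wronskian_eq_zero_of_div_eq_div (hab : a < b)
    (hf : ContinuousOn f (Icc a b)) (hg : ContinuousOn g (Icc a b))
    (hf' : DifferentiableOn ℝ f (Ioo a b)) (hg' : DifferentiableOn ℝ g (Ioo a b))
    (hg₀ : ∀ x ∈ Icc a b, g x ≠ 0) (hfg : f a / g a = f b / g b) :
    ∃ z ∈ Ioo a b, wronskian f g z = 0 := by
  obtain ⟨z, hz, hderiv⟩ := exists_deriv_eq_zero hab (hf.div hg hg₀) hfg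
  have hnhds : Ioo a b ∈ nhds z := isOpen_Ioo.mem_nhds hz
  exact ⟨z, hz, wronskian_eq_zero_of_deriv_div_eq_zero (hf'.differentiableAt hnhds)
    (hg'.differentiableAt hnhds) (hg₀ z (Ioo_subset_Icc_self hz)) hderiv⟩

theorem exists_eq_zero_of_wronskian_ne_zero (hab : a < b)
    (hf : ContinuousOn f (Icc a b)) (hg : ContinuousOn g (Icc a b))
    (hf' : DifferentiableOn ℝ f (Ioo a b)) (hg' : DifferentiableOn ℝ g (Ioo a b))
    (hfa : f a = 0) (hfb : f b = 0) (hga : g a ≠ 0) (hgb : g b ≠ 0)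
    (hW : ∀ x ∈ Ioo a b, wronskian f g x ≠ 0) :
    ∃ z ∈ Ioo a b, g z = 0 := by
  by_contra! hg₀
  have hg₀_Icc : ∀ x ∈ Icc a b, g x ≠ 0 := by
    intro x hx
    rcases eq_endpoints_or_mem_Ioo_of_mem_Icc hx with rfl | rfl | hx
    exacts [hga, hgb, hg₀ x hx]
  obtain ⟨z, hz, hWz⟩ := exists_wronskian_eq_zero_of_div_eq_div hab hf hg hf' hg' hg₀_Icc
    (by rw [hfa, hfb, zero_div, zero_div])
  exact hW z hz hWz

theorem sturm_separation_general {s : Set ℝ} (hs : s.OrdConnected)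
    (hf : DifferentiableOn ℝ f s) (hg : DifferentiableOn ℝ g s)
    (hW : ∀ x ∈ s, wronskian f g x ≠ 0) (ha : a ∈ s) (hb : b ∈ s) (hab : a < b)
    (hfa : f a = 0) (hfb : f b = 0) : ∃ z ∈ Ioo a b, g z = 0 := by
  have hIcc : Icc a b ⊆ s := hs.out ha hb
  have hIoo : Ioo a b ⊆ s := Ioo_subset_Icc_self.trans hIcc
  have hga : g a ≠ 0 := right_ne_zero_of_wronskian_ne_zero (hW a ha) hfa
  have hgb : g b ≠ 0 := right_ne_zero_of_wronskian_ne_zero (hW b hb) hfb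
  exact exists_eq_zero_of_wronskian_ne_zero hab (hf.continuousOn.mono hIcc)
    (hg.continuousOn.mono hIcc) (hf.mono hIoo) (hg.mono hIoo) hfa hfb hga hgb
    (fun x hx => hW x (hIoo hx))

end Separation

/-- Sturm separation: if `f₁, f₂` are solutions of `(p f′)′ = q f` on `[0,L]` whose
modified Wronskian `p(f₁f₂′ − f₂f₁′)` is a nonzero constant, then between any two
zeros `a < b` of `f₁` there is a zero of `f₂`. -/
theorem sturm_separation
    (L : ℝ) (hL : 0 < L) (p q : ℝ → ℝ)
    (hp : ContDiffOn ℝ 1 p (Set.Icc 0 L)) (hp_pos : ∀ y ∈ Set.Icc 0 L, 0 < p y)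
    (hq : ContinuousOn q (Set.Icc 0 L))
    (f₁ f₂ : ℝ → ℝ)
    (hf₁ : ContDiffOn ℝ 2 f₁ (Set.Icc 0 L)) (hf₂ : ContDiffOn ℝ 2 f₂ (Set.Icc 0 L))
    (hode₁ : ∀ y ∈ Set.Icc 0 L, deriv (fun s => p s * deriv f₁ s) y = q y * f₁ y)
    (hode₂ : ∀ y ∈ Set.Icc 0 L, deriv (fun s => p s * deriv f₂ s) y = q y * f₂ y)
    (c : ℝ) (hc : c ≠ 0)
    (hW : ∀ y ∈ Set.Icc 0 L,
      p y * (f₁ y * deriv f₂ y - f₂ y * deriv f₁ y) = c)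
    (a b : ℝ) (ha : a ∈ Set.Icc 0 L) (hb : b ∈ Set.Icc 0 L) (hab : a < b)
    (hza : f₁ a = 0) (hzb : f₁ b = 0) :
    ∃ z ∈ Set.Ioo a b, f₂ z = 0 := by
  have hW₀ : ∀ y ∈ Icc 0 L, wronskian f₁ f₂ y ≠ 0 :=
    fun y hy => right_ne_zero_of_mul (ne_of_eq_of_ne (hW y hy) hc)
  exact sturm_separation_general ordConnected_Icc (hf₁.differentiableOn two_ne_zero)
    (hf₂.differentiableOn two_ne_zero) hW₀ ha hb hab hza hzb
end

section
/- Let s ∈ C¹[0,T] with s(0) = 0 and 0 < s(t) ≤ L for t ∈ (0,T], and let D(s) = {(y,t) ∈ ℝ² : 0 < y < s(t), 0 < t < T}. Then the heat polynomials {h_n}_{n≥0} form a complete system of solutions of the heat equation on D(s): for every solution u of u_{yy} = u_t that is twice continuously differentiable in y and once in t in D(s), every compact subset K of D(s) and every ε > 0, there exist an integer N and real constants a₀, …, a_N such that max_{(y,t) ∈ K} |u(y,t) − Σ_{n=0}^N a_n h_n(y,t)| < ε. -/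
/-- The heat polynomial `h_n(x,t) = ∑_{k=0}^{⌊n/2⌋} c_k^n x^{n−2k} t^k` with
`c_k^n = n! / ((n−2k)! k!)`. -/
noncomputable def heatPoly (n : ℕ) (x t : ℝ) : ℝ :=
  ∑ k ∈ Finset.range (n / 2 + 1),
    ((n.factorial : ℝ) / ((n - 2 * k).factorial * k.factorial)) * x ^ (n - 2 * k) * t ^ k

/-! Cut off the solution `u` near a horizontally convex compact set `K`: the resulting compactly
supported function `w` is the heat potential of `f = w_t - w_xx`, and `f` vanishes near `K`. So on
`K` it is a superposition of heat kernels with poles off `K`, and it suffices that every continuous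
linear map `L` on `C(K, ℂ)` which kills the heat polynomials kills these kernels.

By the generating function, `L` kills the exponentials `exp (k x + k² t)`. Let the abscissa `η` of
the pole `(η, τ)` lie to the right of all of `K`. Then the Laplace transform in `τ` of the kernel is
a multiple of such an exponential, so by uniqueness of the transform `L` kills the kernel. Since the
kernel is analytic in `η` as long as `η` stays to the right of the slice of `K` at height `τ`, the
identity theorem moves the pole next to that slice; poles on the left follow by reflection. -/

namespace HeatPolynomial

open Set Filter Topology MeasureTheory

section HorizontalConvexity

variable {Y : Type*}

/-- A set is horizontally convex if its slices at constant second coordinate are intervals. -/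
def HorizontallyConvex (D : Set (ℝ × Y)) : Prop :=
  ∀ t, {y | (y, t) ∈ D}.OrdConnected

/-- The smallest horizontally convex set containing `K`. -/
def horizontalHull (K : Set (ℝ × Y)) : Set (ℝ × Y) :=
  {z | ∃ a b, (a, z.2) ∈ K ∧ (b, z.2) ∈ K ∧ z.1 ∈ Icc a b}

theorem subset_horizontalHull (K : Set (ℝ × Y)) : K ⊆ horizontalHull K :=
  fun z hz => ⟨z.1, z.1, hz, hz, le_rfl, le_rfl⟩

theorem horizontallyConvex_horizontalHull (K : Set (ℝ × Y)) :
    HorizontallyConvex (horizontalHull K) :=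
  fun _ => ⟨fun _ ⟨a, _, ha, _, hy₁⟩ _ ⟨_, b, _, hb, hy₂⟩ _ hy =>
    ⟨a, b, ha, hb, hy₁.1.trans hy.1, hy.2.trans hy₂.2⟩⟩

theorem HorizontallyConvex.horizontalHull_subset {K D : Set (ℝ × Y)} (hD : HorizontallyConvex D)
    (hKD : K ⊆ D) : horizontalHull K ⊆ D :=
  fun z ⟨_, _, ha, hb, hz⟩ => (hD z.2).out (hKD ha) (hKD hb) hz

theorem HorizontallyConvex.forall_lt_or_forall_gt {K : Set (ℝ × Y)} (hK : HorizontallyConvex K)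
    {η : ℝ} {τ : Y} (h : (η, τ) ∉ K) : (∀ y, (y, τ) ∈ K → y < η) ∨ ∀ y, (y, τ) ∈ K → η < y := by
  by_contra! hc
  obtain ⟨⟨b, hb, hηb⟩, a, ha, haη⟩ := hc
  exact h ((hK τ).out ha hb ⟨haη, hηb⟩)

theorem isCompact_horizontalHull [TopologicalSpace Y] [T2Space Y] {K : Set (ℝ × Y)}
    (hK : IsCompact K) : IsCompact (horizontalHull K) := by
  have hpairs : IsCompact ((K ×ˢ K) ∩ {w | w.1.2 = w.2.2}) :=
    (hK.prod hK).inter_right (isClosed_eq (by fun_prop) (by fun_prop))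
  have hcont : Continuous fun w : (((ℝ × Y) × (ℝ × Y)) × ℝ) =>
      ((1 - w.2) * w.1.1.1 + w.2 * w.1.2.1, w.1.1.2) := by fun_prop
  convert (hpairs.prod (isCompact_Icc (a := (0 : ℝ)) (b := 1))).image hcont using 1
  ext ⟨y, t⟩
  constructor
  · rintro ⟨a, b, ha, hb, hy⟩
    rw [← segment_eq_Icc (hy.1.trans hy.2), segment_eq_image] at hy
    obtain ⟨r, hr, rfl⟩ := hy
    exact ⟨(((a, t), (b, t)), r), ⟨⟨⟨ha, hb⟩, rfl⟩, hr⟩, rfl⟩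
  · rintro ⟨⟨⟨⟨a, t⟩, ⟨b, t'⟩⟩, r⟩, ⟨⟨⟨ha, hb⟩, ht⟩, hr⟩, heq⟩
    obtain ⟨rfl, rfl⟩ := Prod.mk.inj heq
    obtain rfl : t = t' := ht
    exact (horizontallyConvex_horizontalHull K t).convex (subset_horizontalHull K ha)
      (subset_horizontalHull K hb) (sub_nonneg.2 hr.2) hr.1 (sub_add_cancel 1 r)

end HorizontalConvexity

section Moments

variable {F : Type*} [NormedAddCommGroup F] [NormedSpace ℝ F]

theorem integral_polynomial_mul_eq_zero {a b : ℝ} {g : ℝ → ℝ} (hab : a ≤ b)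
    (hg : ContinuousOn g (Icc a b)) (hmom : ∀ n : ℕ, ∫ y in a..b, y ^ n * g y = 0)
    (p : Polynomial ℝ) : ∫ y in a..b, p.eval y * g y = 0 := by
  rw [← uIcc_of_le hab] at hg
  have hint (n : ℕ) : IntervalIntegrable (fun y => p.coeff n * (y ^ n * g y)) volume a b :=
    (continuousOn_const.mul ((continuous_pow n).continuousOn.mul hg)).intervalIntegrable
  simp_rw [Polynomial.eval_eq_sum_range, Finset.sum_mul, mul_assoc]
  rw [intervalIntegral.integral_finsetSum fun n _ => hint n]
  simp_rw [intervalIntegral.integral_const_mul, hmom, mul_zero, Finset.sum_const_zero]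

theorem eqOn_zero_of_integral_pow_mul_eq_zero {a b : ℝ} {g : ℝ → ℝ} (hab : a < b)
    (hg : ContinuousOn g (Icc a b)) (hmom : ∀ n : ℕ, ∫ y in a..b, y ^ n * g y = 0) :
    EqOn g 0 (Icc a b) := by
  have hg' : ContinuousOn g (uIcc a b) := by rwa [uIcc_of_le hab.le]
  have hgg : ContinuousOn (fun y => g y * g y) (uIcc a b) := hg'.mul hg'
  have hsq (δ : ℝ) (hδ : 0 < δ) : ∫ y in a..b, g y * g y ≤ δ * ∫ y in a..b, |g y| := by
    obtain ⟨p, hp⟩ := exists_polynomial_near_of_continuousOn a b g hg δ hδ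
    have hpg : ContinuousOn (fun y => p.eval y * g y) (uIcc a b) := by fun_prop
    calc ∫ y in a..b, g y * g y = ∫ y in a..b, (g y * g y - p.eval y * g y) := by
          rw [intervalIntegral.integral_sub hgg.intervalIntegrable hpg.intervalIntegrable,
            integral_polynomial_mul_eq_zero hab.le hg hmom, sub_zero]
      _ ≤ ∫ y in a..b, δ * |g y| := by
          refine intervalIntegral.integral_mono_on hab.le
            (hgg.sub hpg).intervalIntegrable
            (continuousOn_const.mul hg'.abs).intervalIntegrable fun y hy => ?_
          rw [← sub_mul]
          refine (le_abs_self _).trans ?_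
          rw [abs_mul, abs_sub_comm]
          exact mul_le_mul_of_nonneg_right (hp y hy).le (abs_nonneg _)
      _ = δ * ∫ y in a..b, |g y| := intervalIntegral.integral_const_mul ..
  have hle : ∫ y in a..b, g y * g y ≤ 0 := by
    have hlim : Tendsto (fun δ => δ * ∫ y in a..b, |g y|) (𝓝[>] 0)
        (𝓝 (0 * ∫ y in a..b, |g y|)) :=
      (continuous_mul_const _).continuousWithinAt
    rw [zero_mul] at hlim
    exact ge_of_tendsto hlim (eventually_mem_nhdsWithin.mono hsq)
  by_contra! hne
  simp only [EqOn, Pi.zero_apply, not_forall] at hne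
  obtain ⟨c, hc, hgc⟩ := hne
  exact hle.not_gt (intervalIntegral.integral_pos hab (hg.mul hg) (fun y _ => mul_self_nonneg _)
    ⟨c, hc, mul_self_pos.2 hgc⟩)

theorem integrable_exp_mul_smul {v : ℝ → F} {a B Q : ℝ} (ha : 0 < a) (hv : Continuous v)
    (hB : ∀ τ, ‖v τ‖ ≤ B) (hQ : ∀ τ, Q ≤ τ → v τ = 0) :
    Integrable fun τ => Real.exp (a * τ) • v τ := by
  rw [← integrableOn_iff_integrable_of_support_subset (s := Iic Q)]
  · exact (integrableOn_exp_mul_Iic ha Q).smul_bdd B hv.aestronglyMeasurable (ae_of_all _ hB)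
  · intro τ hτ
    contrapose! hτ
    simp only [mem_Iic, not_le, Function.mem_support, not_not] at hτ ⊢
    rw [hQ τ hτ.le, smul_zero]

theorem continuous_smul_comp_log {v : ℝ → F} {B : ℝ} (hv : Continuous v) (hB : ∀ τ, ‖v τ‖ ≤ B) :
    Continuous fun y => y • v (Real.log y) := by
  refine continuous_iff_continuousAt.2 fun y => ?_
  rcases eq_or_ne y 0 with rfl | hy
  · have hlim : Tendsto (fun y : ℝ => |y| * B) (𝓝 0) (𝓝 0) := by
      simpa only [abs_zero, zero_mul] using (continuous_abs.mul_const B).tendsto (0 : ℝ)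
    rw [ContinuousAt, zero_smul]
    refine squeeze_zero_norm (fun y => ?_) hlim
    rw [norm_smul, Real.norm_eq_abs]
    exact mul_le_mul_of_nonneg_left (hB _) (abs_nonneg y)
  · exact continuousAt_id.smul (hv.continuousAt.comp (Real.continuousAt_log hy))

theorem integral_comp_exp_smul (f : ℝ → F) :
    ∫ τ, Real.exp τ • f (Real.exp τ) = ∫ y in Ioi 0, f y := by
  rw [← Real.range_exp, ← image_univ, integral_image_eq_integral_abs_deriv_smul MeasurableSet.univ
    (fun τ _ => (Real.hasDerivAt_exp τ).hasDerivWithinAt) Real.exp_injective.injOn]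
  simp only [Real.abs_exp, Measure.restrict_univ]

variable [CompleteSpace F]

theorem eqOn_zero_of_integral_pow_smul_eq_zero {a b : ℝ} {g : ℝ → F} (hab : a < b)
    (hg : ContinuousOn g (Icc a b)) (hmom : ∀ n : ℕ, ∫ y in a..b, y ^ n • g y = 0) :
    EqOn g 0 (Icc a b) := by
  intro y hy
  refine SeparatingDual.eq_zero_of_forall_dual_eq_zero (R := ℝ) fun φ => ?_
  refine eqOn_zero_of_integral_pow_mul_eq_zero (g := fun y => φ (g y)) hab
    (φ.continuous.comp_continuousOn hg) (fun n => ?_) hy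
  have hint : IntervalIntegrable (fun y => y ^ n • g y) volume a b := by
    refine ContinuousOn.intervalIntegrable ?_
    rw [uIcc_of_le hab.le]
    exact (continuous_pow n).continuousOn.smul hg
  simpa only [map_smul, smul_eq_mul, hmom, map_zero] using φ.intervalIntegral_comp_comm hint

-- With `y = exp τ` these integrals are the moments of `y • v (log y)`, continuous at `0` thanks to
-- the factor `y`.
theorem eq_zero_of_integral_exp_nat_mul_smul_eq_zero {v : ℝ → F} {B Q : ℝ} (hv : Continuous v)
    (hB : ∀ τ, ‖v τ‖ ≤ B) (hQ : ∀ τ, Q ≤ τ → v τ = 0)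
    (hL : ∀ n : ℕ, ∫ τ, Real.exp ((n + 2) * τ) • v τ = 0) (τ : ℝ) : v τ = 0 := by
  have hmom (n : ℕ) : ∫ y in (0)..Real.exp Q, y ^ n • y • v (Real.log y) = 0 := by
    rw [intervalIntegral.integral_of_le (Real.exp_nonneg Q), ← hL n,
      ← setIntegral_eq_of_subset_of_forall_sdiff_eq_zero (measurableSet_Ioi (a := (0 : ℝ)))
        Ioc_subset_Ioi_self, ← integral_comp_exp_smul]
    · refine integral_congr_ae (ae_of_all _ fun τ => ?_)
      simp only [smul_smul, Real.log_exp, ← Real.exp_nat_mul, ← Real.exp_add]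
      ring_nf
    · rintro y ⟨hy, hyQ⟩
      have hQy : Real.exp Q ≤ y := (not_le.1 fun h => hyQ ⟨hy, h⟩).le
      rw [hQ _ ((Real.le_log_iff_exp_le hy).2 hQy), smul_zero, smul_zero]
  rcases le_total Q τ with hτ | hτ
  · exact hQ τ hτ
  · have h := eqOn_zero_of_integral_pow_smul_eq_zero (Real.exp_pos Q)
      (continuous_smul_comp_log hv hB).continuousOn hmom
      ⟨Real.exp_nonneg τ, Real.exp_le_exp.2 hτ⟩
    simpa only [Real.log_exp, Pi.zero_apply, smul_eq_zero, Real.exp_ne_zero, false_or] using h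

end Moments

section GaussianIntegral

variable {F : Type*} [NormedAddCommGroup F] [NormedSpace ℝ F]

theorem integral_Ioi_comp_sq_smul (g : ℝ → F) :
    ∫ r in Ioi 0, (2 * r) • g (r ^ 2) = ∫ s in Ioi 0, g s := by
  rw [← integral_comp_rpow_Ioi_of_pos (g := g) zero_lt_two]
  refine setIntegral_congr_fun measurableSet_Ioi fun r _ => ?_
  norm_num

theorem integral_Ioi_comp_const_div_smul {c : ℝ} (hc : 0 < c) (g : ℝ → F) :
    ∫ r in Ioi 0, (c / r ^ 2) • g (c / r) = ∫ r in Ioi 0, g r := by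
  have hderiv (r : ℝ) (hr : r ∈ Ioi (0 : ℝ)) :
      HasDerivWithinAt (fun r => c / r) (-(c / r ^ 2)) (Ioi 0) r := by
    simpa only [div_eq_mul_inv, mul_neg, neg_mul, Pi.inv_def] using
      ((hasDerivAt_inv (ne_of_gt hr)).const_mul c).hasDerivWithinAt
  have hinj : InjOn (fun r => c / r) (Ioi 0) := fun r _ r' _ h => by
    simpa only [div_eq_mul_inv, mul_eq_mul_left_iff, inv_inj, hc.ne', or_false] using h
  have himage : (fun r => c / r) '' Ioi 0 = Ioi 0 := by
    refine Subset.antisymm (image_subset_iff.2 fun r hr => div_pos hc hr) fun r hr => ?_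
    exact ⟨c / r, div_pos hc hr, div_div_cancel₀ hc.ne'⟩
  conv_rhs => rw [← himage, integral_image_eq_integral_abs_deriv_smul measurableSet_Ioi hderiv hinj]
  refine setIntegral_congr_fun measurableSet_Ioi fun r _ => ?_
  rw [abs_neg, abs_of_nonneg (by positivity)]

section CauchySchlomilch

variable {a b : ℝ}

theorem hasDerivAt_mul_sub_div (a b : ℝ) {r : ℝ} (hr : r ≠ 0) :
    HasDerivAt (fun r => a * r - b / r) (a + b / r ^ 2) r := by
  refine (((hasDerivAt_id r).const_mul a).sub ((hasDerivAt_inv hr).const_mul b)).congr_deriv ?_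
  simp only [mul_one, mul_neg, sub_neg_eq_add, div_eq_mul_inv]

theorem monotoneOn_mul_sub_div (ha : 0 < a) (hb : 0 < b) :
    MonotoneOn (fun r => a * r - b / r) (Ioi 0) := fun _ hr _ _ h =>
  sub_le_sub (mul_le_mul_of_nonneg_left h ha.le) (div_le_div_of_nonneg_left hb.le hr h)

theorem image_mul_sub_div_Ioi (ha : 0 < a) (hb : 0 < b) :
    (fun r => a * r - b / r) '' Ioi 0 = univ := by
  refine eq_univ_of_forall fun x => ?_
  have hroot : |x| < √(x ^ 2 + 4 * a * b) := by
    rw [← Real.sqrt_sq_eq_abs]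
    exact Real.sqrt_lt_sqrt (sq_nonneg x) (by nlinarith [mul_pos ha hb])
  have hpos : 0 < x + √(x ^ 2 + 4 * a * b) := by linarith [neg_abs_le x]
  refine ⟨(x + √(x ^ 2 + 4 * a * b)) / (2 * a), div_pos hpos (by positivity), ?_⟩
  have hsq := Real.sq_sqrt (show 0 ≤ x ^ 2 + 4 * a * b by positivity)
  have hne := hpos.ne'
  set d := √(x ^ 2 + 4 * a * b)
  field_simp
  linear_combination hsq

theorem integral_Ioi_add_div_sq_smul_comp (ha : 0 < a) (hb : 0 < b) (f : ℝ → F) :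
    ∫ r in Ioi 0, (a + b / r ^ 2) • f (a * r - b / r) = ∫ x, f x := by
  rw [← setIntegral_univ (μ := volume) (f := f), ← image_mul_sub_div_Ioi ha hb]
  exact (integral_image_eq_integral_deriv_smul_of_monotoneOn measurableSet_Ioi
    (fun r hr => (hasDerivAt_mul_sub_div a b (ne_of_gt hr)).hasDerivWithinAt)
    (monotoneOn_mul_sub_div ha hb) f).symm

theorem integrableOn_Ioi_add_div_sq_smul_comp (ha : 0 < a) (hb : 0 < b) {f : ℝ → F}
    (hf : Integrable f) : IntegrableOn (fun r => (a + b / r ^ 2) • f (a * r - b / r)) (Ioi 0) := by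
  rw [← integrableOn_univ, ← image_mul_sub_div_Ioi ha hb] at hf
  exact (integrableOn_image_iff_integrableOn_deriv_smul_of_monotoneOn measurableSet_Ioi
    (fun r hr => (hasDerivAt_mul_sub_div a b (ne_of_gt hr)).hasDerivWithinAt)
    (monotoneOn_mul_sub_div ha hb) f).1 hf

theorem integral_Ioi_exp_neg_sq_sub_div_sq (ha : 0 < a) (hb : 0 < b) :
    ∫ r in Ioi 0, Real.exp (-(a * r) ^ 2 - (b / r) ^ 2)
      = √Real.pi / (2 * a) * Real.exp (-(2 * a * b)) := by
  set g : ℝ → ℝ := fun r => Real.exp (-(a * r) ^ 2 - (b / r) ^ 2) with hg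
  set f : ℝ → ℝ := fun x => Real.exp (-(2 * a * b)) * Real.exp (-1 * x ^ 2) with hf
  have hf_int : Integrable f := (integrable_exp_neg_mul_sq zero_lt_one).const_mul _
  have hcomp : EqOn (fun r => (a + b / r ^ 2) • f (a * r - b / r))
      (fun r => a * g r + b / r ^ 2 * g r) (Ioi 0) := fun r hr => by
    have hr : r ≠ 0 := ne_of_gt hr
    simp only [hf, hg, ← Real.exp_add, smul_eq_mul, ← add_mul]
    congr 2
    field_simp
    ring
  have hswap : ∫ r in Ioi 0, b / r ^ 2 * g r = a * ∫ r in Ioi 0, g r := by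
    rw [← integral_Ioi_comp_const_div_smul (div_pos hb ha) g, ← integral_const_mul]
    refine setIntegral_congr_fun measurableSet_Ioi fun r hr => ?_
    have hr : r ≠ 0 := ne_of_gt hr
    simp only [hg, smul_eq_mul, ← mul_assoc]
    congr 2 <;> field_simp
    ring
  have hsum_int := (integrableOn_Ioi_add_div_sq_smul_comp ha hb hf_int).congr_fun hcomp
    measurableSet_Ioi
  have hint : IntegrableOn (fun r => a * g r) (Ioi 0) := by
    refine Integrable.mono' hsum_int (Measurable.aestronglyMeasurable (by fun_prop))
      (ae_of_all _ fun r => ?_)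
    rw [Real.norm_of_nonneg (by positivity)]
    exact le_add_of_nonneg_right (by positivity)
  have hint' : IntegrableOn (fun r => b / r ^ 2 * g r) (Ioi 0) := by
    simpa only [Pi.sub_def, add_sub_cancel_left] using hsum_int.sub hint
  have hvalue := integral_Ioi_add_div_sq_smul_comp ha hb f
  rw [setIntegral_congr_fun measurableSet_Ioi hcomp, integral_add hint hint', hswap,
    integral_const_mul, integral_const_mul, integral_gaussian, div_one] at hvalue
  field_simp
  linear_combination hvalue

end CauchySchlomilch

end GaussianIntegral

section Kernel

/-- The fundamental solution of the heat equation. It vanishes for `t ≤ 0`, because then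
`√(4 * π * t) = 0` and division by zero gives zero. -/
noncomputable def heatKernel (x t : ℝ) : ℝ :=
  Real.exp (-x ^ 2 / (4 * t)) / √(4 * Real.pi * t)

/-- The extension of `heatKernel` to complex values of the space variable. -/
noncomputable def complexHeatKernel (z : ℂ) (t : ℝ) : ℂ :=
  Complex.exp (-z ^ 2 / (4 * t)) / √(4 * Real.pi * t)

theorem ofReal_heatKernel (x t : ℝ) : (heatKernel x t : ℂ) = complexHeatKernel x t := by
  simp only [heatKernel, complexHeatKernel]
  push_cast
  rfl

theorem complexHeatKernel_of_nonpos (z : ℂ) {t : ℝ} (ht : t ≤ 0) : complexHeatKernel z t = 0 := by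
  rw [complexHeatKernel, Real.sqrt_eq_zero_of_nonpos (by nlinarith [Real.pi_pos]),
    Complex.ofReal_zero, div_zero]

theorem heatKernel_of_nonpos (x : ℝ) {t : ℝ} (ht : t ≤ 0) : heatKernel x t = 0 := by
  rw [heatKernel, Real.sqrt_eq_zero_of_nonpos (by nlinarith [Real.pi_pos]), div_zero]

theorem complexHeatKernel_neg (z : ℂ) (t : ℝ) :
    complexHeatKernel (-z) t = complexHeatKernel z t := by
  rw [complexHeatKernel, neg_sq, complexHeatKernel]

theorem norm_complexHeatKernel (z : ℂ) (t : ℝ) :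
    ‖complexHeatKernel z t‖ = Real.exp (-((z ^ 2).re / (4 * t))) / √(4 * Real.pi * t) := by
  have hre : (-z ^ 2 / (4 * t)).re = -((z ^ 2).re / (4 * t)) := by
    rw [show (4 * t : ℂ) = ((4 * t : ℝ) : ℂ) by push_cast; rfl, Complex.div_ofReal_re,
      Complex.neg_re, neg_div]
  rw [complexHeatKernel, norm_div, Complex.norm_exp, hre, Complex.norm_real,
    Real.norm_of_nonneg (Real.sqrt_nonneg _)]

theorem differentiable_complexHeatKernel (t : ℝ) :
    Differentiable ℂ fun z => complexHeatKernel z t := by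
  unfold complexHeatKernel
  fun_prop

theorem norm_complexHeatKernel_le_exp {c t : ℝ} {z : ℂ} (hz : c ≤ (z ^ 2).re) (ht : 0 < t) :
    ‖complexHeatKernel z t‖ ≤ Real.exp (-(c / (4 * t))) / (2 * √t) := by
  have hsqrt : 2 * √t ≤ √(4 * Real.pi * t) := by
    refine Real.le_sqrt_of_sq_le ?_
    rw [mul_pow, Real.sq_sqrt ht.le]
    nlinarith [Real.pi_gt_three]
  rw [norm_complexHeatKernel]
  gcongr

theorem norm_complexHeatKernel_le_mul_sqrt {c : ℝ} {z : ℂ} (hc : 0 < c) (hz : c ≤ (z ^ 2).re)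
    (t : ℝ) : ‖complexHeatKernel z t‖ ≤ 2 / c * √t := by
  rcases le_or_gt t 0 with ht | ht
  · rw [complexHeatKernel_of_nonpos z ht, norm_zero]
    positivity
  calc ‖complexHeatKernel z t‖ ≤ (Real.exp (c / (4 * t)))⁻¹ / (2 * √t) := by
        rw [← Real.exp_neg]
        exact norm_complexHeatKernel_le_exp hz ht
    _ ≤ (c / (4 * t))⁻¹ / (2 * √t) := by
        gcongr
        linarith [Real.add_one_le_exp (c / (4 * t))]
    _ = 2 / c * √t := by
        field_simp
        rw [Real.sq_sqrt ht.le]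
        ring

theorem norm_complexHeatKernel_le {c : ℝ} {z : ℂ} (hc : 0 < c) (hz : c ≤ (z ^ 2).re) (t : ℝ) :
    ‖complexHeatKernel z t‖ ≤ 1 / √c := by
  rcases le_or_gt t 0 with ht | ht
  · rw [complexHeatKernel_of_nonpos z ht, norm_zero]
    positivity
  have hexp : √(c / (4 * t)) ≤ Real.exp (c / (4 * t)) := by
    refine Real.sqrt_le_iff.2 ⟨Real.exp_nonneg _, ?_⟩
    have hx : 0 ≤ c / (4 * t) := by positivity
    nlinarith [Real.add_one_le_exp (c / (4 * t))]
  calc ‖complexHeatKernel z t‖ ≤ (Real.exp (c / (4 * t)))⁻¹ / (2 * √t) := by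
        rw [← Real.exp_neg]
        exact norm_complexHeatKernel_le_exp hz ht
    _ ≤ (√(c / (4 * t)))⁻¹ / (2 * √t) := by gcongr
    _ = 1 / √c := by
        have h4 : √(4 : ℝ) = 2 := by
          rw [show (4 : ℝ) = 2 ^ 2 by norm_num, Real.sqrt_sq zero_le_two]
        rw [Real.sqrt_div hc.le, Real.sqrt_mul zero_le_four, h4]
        field_simp

theorem continuousAt_complexHeatKernel {w : ℂ × ℝ} (hw : w.2 = 0 → 0 < (w.1 ^ 2).re) :
    ContinuousAt (fun w => complexHeatKernel w.1 w.2) w := by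
  rcases lt_trichotomy w.2 0 with h | h | h
  · refine (continuousAt_const (y := (0 : ℂ))).congr ?_
    filter_upwards [continuous_snd.continuousAt.eventually_lt_const h] with w hw
    exact (complexHeatKernel_of_nonpos _ hw.le).symm
  · have hc : 0 < (w.1 ^ 2).re / 2 := half_pos (hw h)
    have hre : ∀ᶠ w' : ℂ × ℝ in 𝓝 w, (w.1 ^ 2).re / 2 < (w'.1 ^ 2).re :=
      Tendsto.eventually_const_lt (half_lt_self (hw h))
        (Continuous.tendsto (f := fun w' : ℂ × ℝ => (w'.1 ^ 2).re) (by fun_prop) w)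
    have hlim : Tendsto (fun w' : ℂ × ℝ => 2 / ((w.1 ^ 2).re / 2) * √w'.2) (𝓝 w) (𝓝 0) := by
      refine Continuous.tendsto' (by fun_prop) _ _ ?_
      rw [h, Real.sqrt_zero, mul_zero]
    rw [ContinuousAt, complexHeatKernel_of_nonpos _ h.le]
    refine squeeze_zero_norm' ?_ hlim
    filter_upwards [hre] with w' hw'
    exact norm_complexHeatKernel_le_mul_sqrt hc hw'.le _
  · unfold complexHeatKernel
    have hsqrt : √(4 * Real.pi * w.2) ≠ 0 := by positivity
    have h4 : (4 * w.2 : ℂ) ≠ 0 := by exact_mod_cast (by positivity : 4 * w.2 ≠ 0)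
    refine ContinuousAt.div (ContinuousAt.cexp (ContinuousAt.div ?_ ?_ ?_)) ?_ ?_
    all_goals first | fun_prop | assumption_mod_cast

theorem integral_exp_mul_heatKernel {k z : ℝ} (hk : 0 < k) (hz : 0 < z) (t : ℝ) :
    ∫ τ, Real.exp (k ^ 2 * τ) * heatKernel z (t - τ)
      = Real.exp (k ^ 2 * t - k * z) / (2 * k) := by
  calc ∫ τ, Real.exp (k ^ 2 * τ) * heatKernel z (t - τ)
      = ∫ s, Real.exp (k ^ 2 * (t - s)) * heatKernel z s := by
        rw [← integral_sub_left_eq_self _ volume t]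
        simp only [sub_sub_cancel]
    _ = ∫ s in Ioi 0, Real.exp (k ^ 2 * (t - s)) * heatKernel z s := by
        refine (setIntegral_eq_integral_of_forall_compl_eq_zero fun s hs => ?_).symm
        rw [heatKernel_of_nonpos z (not_lt.1 hs), mul_zero]
    _ = ∫ r in Ioi 0, Real.exp (k ^ 2 * t) / √Real.pi
          * Real.exp (-(k * r) ^ 2 - (z / 2 / r) ^ 2) := by
        rw [← integral_Ioi_comp_sq_smul]
        refine setIntegral_congr_fun measurableSet_Ioi fun r (hr : 0 < r) => ?_
        have hsqrt : √(4 * Real.pi * r ^ 2) = 2 * √Real.pi * r := by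
          rw [← Real.sqrt_sq (by positivity : 0 ≤ 2 * √Real.pi * r), mul_pow, mul_pow,
            Real.sq_sqrt Real.pi_nonneg]
          norm_num
        have hexp : Real.exp (k ^ 2 * (t - r ^ 2)) * Real.exp (-z ^ 2 / (4 * r ^ 2))
            = Real.exp (k ^ 2 * t) * Real.exp (-(k * r) ^ 2 - (z / 2 / r) ^ 2) := by
          rw [← Real.exp_add, ← Real.exp_add]
          congr 1
          field_simp
          ring
        rw [smul_eq_mul, heatKernel, hsqrt, div_mul_eq_mul_div, ← hexp]
        field_simp
    _ = Real.exp (k ^ 2 * t - k * z) / (2 * k) := by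
        rw [integral_const_mul, integral_Ioi_exp_neg_sq_sub_div_sq hk (half_pos hz)]
        rw [Real.exp_sub, Real.exp_neg, show 2 * k * (z / 2) = k * z by ring]
        field_simp

end Kernel

section VectorValuedHolomorphy

variable {X E : Type*} [TopologicalSpace X] [CompactSpace X] [NormedAddCommGroup E]
  [NormedSpace ℂ E] [CompleteSpace E]

theorem circleIntegral_continuousMap_apply {f : ℂ → C(X, E)} {c : ℂ} {R : ℝ}
    (hf : CircleIntegrable f c R) (x : X) : (∮ z in C(c, R), f z) x = ∮ z in C(c, R), f z x :=
  ((ContinuousMap.evalCLM ℂ x).intervalIntegral_comp_comm hf.out).symm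

theorem differentiableOn_continuousMap {f : ℂ → C(X, E)} {Ω : Set ℂ} (hΩ : IsOpen Ω)
    (hf : ContinuousOn f Ω) (hfx : ∀ x, DifferentiableOn ℂ (fun z => f z x) Ω) :
    DifferentiableOn ℂ f Ω := by
  intro c hc
  obtain ⟨R, hR, hball⟩ := Metric.nhds_basis_closedBall.mem_iff.1 (hΩ.mem_nhds hc)
  lift R to NNReal using hR.le
  have hsphere : ContinuousOn f (Metric.sphere c R) :=
    hf.mono (Metric.sphere_subset_closedBall.trans hball)
  have hcauchy := (hasFPowerSeriesOn_cauchy_integral (hsphere.circleIntegrable R.2)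
    (by exact_mod_cast hR)).analyticAt.differentiableAt
  refine (hcauchy.congr_of_eventuallyEq ?_).differentiableWithinAt
  filter_upwards [Metric.ball_mem_nhds c hR] with w hw
  have hint : CircleIntegrable (fun z => (z - w)⁻¹ • f z) c R := by
    refine ContinuousOn.circleIntegrable R.2 (ContinuousOn.smul (ContinuousOn.inv₀
      (f := fun z => z - w) (by fun_prop) fun z hz hzw => ?_) hsphere)
    rw [sub_eq_zero.1 hzw] at hz
    exact (Metric.mem_ball.1 hw).ne hz
  ext x
  rw [ContinuousMap.smul_apply, circleIntegral_continuousMap_apply hint]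
  simp only [ContinuousMap.smul_apply]
  rw [((hfx x).mono hball).circleIntegral_sub_inv_smul hw, inv_smul_smul₀ Complex.two_pi_I_ne_zero]

end VectorValuedHolomorphy

section KernelSection

variable {X : Type*} [TopologicalSpace X]

/-- The poles `(η, τ)` for which the heat kernel based at `(η, τ)` is continuous at every point
`(p x, q x)`, namely those with `Re (p x - η)² > 0` on the slice `q x = τ`. -/
def regularPoles (p q : C(X, ℝ)) : Set (ℂ × ℝ) :=
  {w | ∀ x, q x = w.2 → 0 < ((p x - w.1) ^ 2).re}

/-- The heat kernel with complex pole `w`, as a continuous function of the point `(p x, q x)`.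
For poles at which this is not continuous it takes the value `0`. -/
noncomputable def kernelSection (p q : C(X, ℝ)) (w : ℂ × ℝ) : C(X, ℂ) :=
  ContinuousMap.mkD (fun x => complexHeatKernel (p x - w.1) (q x - w.2)) 0

variable {p q : C(X, ℝ)} {w : ℂ × ℝ}

theorem continuousOn_complexHeatKernel_sub (p q : C(X, ℝ)) :
    ContinuousOn (Function.uncurry fun (w : ℂ × ℝ) x => complexHeatKernel (p x - w.1) (q x - w.2))
      (regularPoles p q ×ˢ univ) := by
  rintro ⟨w, x⟩ ⟨hw, -⟩
  have hdiff : Continuous fun v : (ℂ × ℝ) × X => ((p v.2 - v.1.1 : ℂ), q v.2 - v.1.2) := by fun_prop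
  have hkernel := continuousAt_complexHeatKernel (w := (p x - w.1, q x - w.2))
    fun h => hw x (sub_eq_zero.1 h)
  exact (hkernel.comp_of_eq hdiff.continuousAt rfl).continuousWithinAt

theorem kernelSection_apply (hw : w ∈ regularPoles p q) (x : X) :
    kernelSection p q w x = complexHeatKernel (p x - w.1) (q x - w.2) :=
  ContinuousMap.mkD_apply_of_continuous
    ((continuousOn_complexHeatKernel_sub p q).comp_continuous (f := fun x => (w, x))
      (Continuous.prodMk_right w) fun _ => ⟨hw, mem_univ _⟩)

theorem kernelSection_neg (p q : C(X, ℝ)) (η : ℂ) (τ : ℝ) :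
    kernelSection (-p) q (-η, τ) = kernelSection p q (η, τ) := by
  unfold kernelSection
  congr 1
  ext x
  rw [← complexHeatKernel_neg, ContinuousMap.neg_apply, Complex.ofReal_neg, neg_sub_neg, neg_sub]

theorem continuousOn_kernelSection [CompactSpace X] (p q : C(X, ℝ)) :
    ContinuousOn (kernelSection p q) (regularPoles p q) :=
  ContinuousMap.continuousOn_mkD_of_uncurry _ _ (continuousOn_complexHeatKernel_sub p q)

theorem differentiableOn_kernelSection [CompactSpace X] {τ : ℝ} {Ω : Set ℂ} (hΩ : IsOpen Ω)
    (hreg : ∀ z ∈ Ω, (z, τ) ∈ regularPoles p q) :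
    DifferentiableOn ℂ (fun z => kernelSection p q (z, τ)) Ω := by
  refine differentiableOn_continuousMap hΩ
    ((continuousOn_kernelSection p q).comp (by fun_prop) hreg) fun x => ?_
  refine DifferentiableOn.congr (Differentiable.differentiableOn ?_) fun z hz =>
    kernelSection_apply (hreg z hz) x
  exact (differentiable_complexHeatKernel (q x - τ)).comp (by fun_prop)

theorem norm_kernelSection_le [CompactSpace X] {c : ℝ} (hc : 0 < c)
    (h : ∀ x, c ≤ ((p x - w.1) ^ 2).re) : ‖kernelSection p q w‖ ≤ 1 / √c := by
  refine (ContinuousMap.norm_le _ (by positivity)).2 fun x => ?_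
  rw [kernelSection_apply fun x _ => hc.trans_le (h x)]
  exact norm_complexHeatKernel_le hc (h x) _

theorem kernelSection_eq_zero (hw : w ∈ regularPoles p q) (hq : ∀ x, q x ≤ w.2) :
    kernelSection p q w = 0 := by
  ext x
  rw [kernelSection_apply hw, complexHeatKernel_of_nonpos _ (sub_nonpos.2 (hq x)),
    ContinuousMap.zero_apply]

/-- The solution `exp (k * x + k² * t)` of the heat equation pulled back along `(p, q)`. -/
noncomputable def exponentialSolution (p q : C(X, ℝ)) (k : ℝ) : C(X, ℂ) :=
  ⟨fun x => (Real.exp (k * p x + k ^ 2 * q x) : ℝ), by fun_prop⟩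

theorem exponentialSolution_apply (p q : C(X, ℝ)) (k : ℝ) (x : X) :
    exponentialSolution p q k x = (Real.exp (k * p x + k ^ 2 * q x) : ℝ) :=
  rfl

theorem exponentialSolution_neg (p q : C(X, ℝ)) (k : ℝ) :
    exponentialSolution (-p) q k = exponentialSolution p q (-k) := by
  ext x
  simp only [exponentialSolution_apply, ContinuousMap.neg_apply, neg_sq, neg_mul, mul_neg]

end KernelSection

section Annihilation

variable {X F : Type*} [TopologicalSpace X] [CompactSpace X]
  [NormedAddCommGroup F] [NormedSpace ℂ F] {p q : C(X, ℝ)}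

theorem exists_lt_forall_slice_le {η τ : ℝ} (hη : ∀ x, q x = τ → p x < η) :
    ∃ a < η, ∀ x, q x = τ → p x ≤ a := by
  have hslice : IsCompact {x | q x = τ} := (isClosed_eq q.continuous continuous_const).isCompact
  obtain ⟨b, hb, hle⟩ := hslice.exists_forall_le' (f := fun x => η - p x) (a := 0) (by fun_prop)
    fun x hx => sub_pos.2 (hη x hx)
  exact ⟨η - b, sub_lt_self η hb, fun x hx => le_sub_comm.1 (hle x hx)⟩

theorem exists_le_sq_re_sub {η : ℝ} (hη : ∀ x, p x < η) :
    ∃ c > 0, ∀ x, c ≤ (((p x : ℂ) - (η : ℂ)) ^ 2).re := by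
  have hre (x : X) : (((p x : ℂ) - (η : ℂ)) ^ 2).re = (η - p x) ^ 2 := by
    rw [← Complex.ofReal_sub, ← Complex.ofReal_pow, Complex.ofReal_re, sub_sq_comm]
  obtain ⟨c, hc, hle⟩ := isCompact_univ.exists_forall_le' (f := fun x => (η - p x) ^ 2) (a := 0)
    (by fun_prop) fun x _ => pow_pos (sub_pos.2 (hη x)) 2
  exact ⟨c, hc, fun x => (hle x (mem_univ x)).trans_eq (hre x).symm⟩

theorem mem_regularPoles_of_forall_lt {η : ℝ} (hη : ∀ x, p x < η) (τ : ℝ) :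
    ((η : ℂ), τ) ∈ regularPoles p q := by
  obtain ⟨c, hc, hle⟩ := exists_le_sq_re_sub hη
  exact fun x _ => hc.trans_le (hle x)

theorem kernelSection_eq_zero_of_norm_le {η τ : ℝ} (hη : ∀ x, p x < η) (hτ : ‖q‖ ≤ τ) :
    kernelSection p q ((η : ℂ), τ) = 0 :=
  kernelSection_eq_zero (mem_regularPoles_of_forall_lt hη τ)
    fun x => ((le_abs_self _).trans (q.norm_coe_le_norm x)).trans hτ

theorem kernelSection_apply_of_forall_lt {η : ℝ} (hη : ∀ x, p x < η) (τ : ℝ) (x : X) :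
    kernelSection p q ((η : ℂ), τ) x = heatKernel (η - p x) (q x - τ) := by
  rw [kernelSection_apply (mem_regularPoles_of_forall_lt hη τ), ofReal_heatKernel,
    ← complexHeatKernel_neg, neg_sub, Complex.ofReal_sub]

theorem continuous_kernelSection_of_forall_lt {η : ℝ} (hη : ∀ x, p x < η) :
    Continuous fun τ : ℝ => kernelSection p q ((η : ℂ), τ) :=
  (continuousOn_kernelSection p q).comp_continuous (by fun_prop) (mem_regularPoles_of_forall_lt hη)

theorem integrable_exp_mul_kernelSection {a η : ℝ} (ha : 0 < a) (hη : ∀ x, p x < η) :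
    Integrable fun τ : ℝ => Real.exp (a * τ) • kernelSection p q ((η : ℂ), τ) := by
  obtain ⟨c, hc, hle⟩ := exists_le_sq_re_sub hη
  exact integrable_exp_mul_smul ha (continuous_kernelSection_of_forall_lt hη)
    (fun τ => norm_kernelSection_le hc hle) fun τ => kernelSection_eq_zero_of_norm_le hη

theorem integral_exp_mul_kernelSection {k η : ℝ} (hk : 0 < k) (hη : ∀ x, p x < η) :
    ∫ τ : ℝ, Real.exp (k ^ 2 * τ) • kernelSection p q ((η : ℂ), τ)
      = (Real.exp (-(k * η)) / (2 * k)) • exponentialSolution p q k := by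
  refine ContinuousMap.ext fun x => ?_
  rw [ContinuousMap.integral_apply (integrable_exp_mul_kernelSection (pow_pos hk 2) hη)]
  simp only [ContinuousMap.smul_apply, kernelSection_apply_of_forall_lt hη, Complex.real_smul,
    ← Complex.ofReal_mul]
  rw [integral_complex_ofReal, integral_exp_mul_heatKernel hk (sub_pos.2 (hη x)),
    exponentialSolution_apply, ← Complex.ofReal_mul, div_mul_eq_mul_div, ← Real.exp_add]
  ring_nf

variable [CompleteSpace F] {L : C(X, ℂ) →L[ℂ] F}

theorem map_kernelSection_of_forall_lt (hL : ∀ k, L (exponentialSolution p q k) = 0) {η : ℝ}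
    (hη : ∀ x, p x < η) (τ : ℝ) : L (kernelSection p q (η, τ)) = 0 := by
  obtain ⟨c, hc, hle⟩ := exists_le_sq_re_sub hη
  refine eq_zero_of_integral_exp_nat_mul_smul_eq_zero (v := fun τ => L (kernelSection p q (η, τ)))
    (B := ‖L‖ * (1 / √c)) (Q := ‖q‖)
    (L.continuous.comp (continuous_kernelSection_of_forall_lt hη))
    (fun τ => L.le_opNorm_of_le (norm_kernelSection_le hc hle))
    (fun τ hτ => ?_) (fun n => ?_) τ
  · rw [kernelSection_eq_zero_of_norm_le hη hτ, map_zero]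
  · have hn : (0 : ℝ) < n + 2 := by positivity
    have hLint := L.integral_comp_comm (integrable_exp_mul_kernelSection (q := q) hn hη)
    simp only [L.map_smul_of_tower] at hLint
    rw [hLint, ← Real.sq_sqrt hn.le, integral_exp_mul_kernelSection (Real.sqrt_pos.2 hn) hη,
      L.map_smul_of_tower, hL, smul_zero]

/-- A sector with vertex `a`, on which `Re (y - z)² > 0` for all real `y ≤ a`. -/
def rightSector (a : ℝ) : Set ℂ :=
  {z | a < z.re - z.im} ∩ {z | a < z.re + z.im}

theorem isOpen_rightSector (a : ℝ) : IsOpen (rightSector a) :=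
  (isOpen_lt continuous_const (by fun_prop)).inter (isOpen_lt continuous_const (by fun_prop))

theorem convex_rightSector (a : ℝ) : Convex ℝ (rightSector a) :=
  (convex_halfSpace_gt (Complex.reLm - Complex.imLm).isLinear a).inter
    (convex_halfSpace_gt (Complex.reLm + Complex.imLm).isLinear a)

theorem ofReal_mem_rightSector {a η : ℝ} : (η : ℂ) ∈ rightSector a ↔ a < η := by
  simp only [rightSector, mem_inter_iff, mem_ofPred_eq, Complex.ofReal_re, Complex.ofReal_im,
    sub_zero, add_zero, and_self]

theorem sq_re_sub_pos {a y : ℝ} {z : ℂ} (hz : z ∈ rightSector a) (hy : y ≤ a) :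
    0 < (((y : ℂ) - z) ^ 2).re := by
  have hfactor : (((y : ℂ) - z) ^ 2).re = (z.re - z.im - y) * (z.re + z.im - y) := by
    simp only [sq, Complex.mul_re, Complex.sub_re, Complex.sub_im, Complex.ofReal_re,
      Complex.ofReal_im]
    ring
  rw [hfactor]
  exact mul_pos (sub_pos.2 (hy.trans_lt hz.1)) (sub_pos.2 (hy.trans_lt hz.2))

theorem map_kernelSection_of_slice_lt (hL : ∀ k, L (exponentialSolution p q k) = 0) {η τ : ℝ}
    (hη : ∀ x, q x = τ → p x < η) : L (kernelSection p q (η, τ)) = 0 := by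
  obtain ⟨a, haη, ha⟩ := exists_lt_forall_slice_le hη
  have hanalytic : AnalyticOnNhd ℂ (fun z => L (kernelSection p q (z, τ))) (rightSector a) :=
    (L.differentiable.comp_differentiableOn (differentiableOn_kernelSection (isOpen_rightSector a)
      fun z hz x hx => sq_re_sub_pos hz (ha x hx))).analyticOnNhd (isOpen_rightSector a)
  obtain ⟨R, haR, hR⟩ : ∃ R > a, ∀ x, p x ≤ R := ⟨max (a + 1) ‖p‖, by simp, fun x =>
    ((le_abs_self _).trans (p.norm_coe_le_norm x)).trans (le_max_right _ _)⟩
  have hfar : ∃ᶠ z in 𝓝[≠] (R : ℂ), L (kernelSection p q (z, τ)) = 0 := by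
    have hofReal : Tendsto (fun r : ℝ => (r : ℂ)) (𝓝[>] R) (𝓝[≠] (R : ℂ)) :=
      Complex.continuous_ofReal.continuousWithinAt.tendsto_nhdsWithin fun r (hr : R < r) =>
        Complex.ofReal_injective.ne hr.ne'
    refine hofReal.frequently (Eventually.frequently ?_)
    filter_upwards [self_mem_nhdsWithin] with r hr
    exact map_kernelSection_of_forall_lt hL (fun x => (hR x).trans_lt hr) τ
  exact hanalytic.eqOn_zero_of_preconnected_of_frequently_eq_zero
    (convex_rightSector a).isPreconnected (ofReal_mem_rightSector.2 haR) hfar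
    (ofReal_mem_rightSector.2 haη)

theorem map_kernelSection_of_lt_slice (hL : ∀ k, L (exponentialSolution p q k) = 0) {η τ : ℝ}
    (hη : ∀ x, q x = τ → η < p x) : L (kernelSection p q (η, τ)) = 0 := by
  have hneg := map_kernelSection_of_slice_lt (p := -p) (q := q) (L := L) (η := -η) (τ := τ)
    (fun k => by rw [exponentialSolution_neg, hL]) fun x hx => neg_lt_neg (hη x hx)
  rwa [Complex.ofReal_neg, kernelSection_neg] at hneg

end Annihilation

section GeneratingFunction

theorem hasSum_sum_range_half {α : Type*} [AddCommMonoid α] [TopologicalSpace α] [ContinuousAdd α]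
    [RegularSpace α] {f : ℕ × ℕ → α} {a : α} (hf : HasSum f a) :
    HasSum (fun n => ∑ k ∈ Finset.range (n / 2 + 1), f (n - 2 * k, k)) a := by
  let e : (Σ n : ℕ, Fin (n / 2 + 1)) ≃ ℕ × ℕ :=
    { toFun := fun i => (i.1 - 2 * i.2, i.2)
      invFun := fun i => ⟨i.1 + 2 * i.2, i.2, by omega⟩
      left_inv := by
        rintro ⟨n, k, hk⟩
        obtain ⟨m, rfl⟩ : ∃ m, n = m + 2 * k := ⟨n - 2 * k, by omega⟩
        congr!
        all_goals simp
      right_inv := fun i => by simp }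
  refine (e.hasSum_iff.2 hf).sigma fun n => ?_
  rw [Finset.sum_range]
  exact hasSum_fintype _

theorem hasSum_heatPoly (k x t : ℝ) :
    HasSum (fun n => k ^ n / n.factorial * heatPoly n x t) (Real.exp (k * x + k ^ 2 * t)) := by
  have hexp (y : ℝ) : HasSum (fun n : ℕ => y ^ n / n.factorial) (Real.exp y) :=
    Real.exp_eq_exp_ℝ ▸ NormedSpace.expSeries_div_hasSum_exp y
  have hprod := hasSum_sum_range_half ((hexp (k * x)).mul (hexp (k ^ 2 * t))
    (summable_mul_of_summable_norm (hexp (k * x)).summable.norm (hexp (k ^ 2 * t)).summable.norm))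
  rw [Real.exp_add]
  refine hprod.congr_fun fun n => ?_
  rw [heatPoly, Finset.mul_sum]
  refine Finset.sum_congr rfl fun j hj => ?_
  have hk : k ^ n = k ^ (n - 2 * j) * (k ^ 2) ^ j := by
    rw [← pow_mul, ← pow_add, Nat.sub_add_cancel (by have := Finset.mem_range.1 hj; omega)]
  rw [hk]
  field_simp
  ring

theorem abs_heatPoly_le {x t M B : ℝ} (hx : |x| ≤ M) (ht : |t| ≤ B) (n : ℕ) :
    |heatPoly n x t| ≤ heatPoly n M B := by
  refine (Finset.abs_sum_le_sum_abs _ _).trans (Finset.sum_le_sum fun k _ => ?_)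
  have hM := (abs_nonneg x).trans hx
  rw [abs_mul, abs_mul, abs_pow, abs_pow, abs_of_nonneg (by positivity)]
  gcongr

variable {X : Type*} [TopologicalSpace X]

/-- The heat polynomial `h_n` pulled back along `(p, q)`. -/
noncomputable def heatPolySection (p q : C(X, ℝ)) (n : ℕ) : C(X, ℂ) :=
  ⟨fun x => (heatPoly n (p x) (q x) : ℝ), by unfold heatPoly; fun_prop⟩

theorem heatPolySection_apply (p q : C(X, ℝ)) (n : ℕ) (x : X) :
    heatPolySection p q n x = (heatPoly n (p x) (q x) : ℝ) :=
  rfl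

theorem hasSum_heatPolySection [CompactSpace X] (p q : C(X, ℝ)) (k : ℝ) :
    HasSum (fun n => (k ^ n / n.factorial) • heatPolySection p q n)
      (exponentialSolution p q k) := by
  have hsummable : Summable fun n => (k ^ n / n.factorial) • heatPolySection p q n := by
    refine (hasSum_heatPoly |k| ‖p‖ ‖q‖).summable.of_norm_bounded fun n => ?_
    have hnorm : ‖heatPolySection p q n‖ ≤ heatPoly n ‖p‖ ‖q‖ := by
      refine (ContinuousMap.norm_le _ ?_).2 fun x => ?_
      · exact (abs_nonneg _).trans (abs_heatPoly_le (x := 0) (t := 0) (by simp) (by simp) n)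
      rw [heatPolySection_apply, Complex.norm_real]
      exact abs_heatPoly_le (p.norm_coe_le_norm x) (q.norm_coe_le_norm x) n
    rw [norm_smul, norm_div, norm_pow, Real.norm_eq_abs, Real.norm_natCast]
    gcongr
  convert hsummable.hasSum
  ext x
  rw [← ContinuousMap.tsum_apply hsummable]
  simp only [ContinuousMap.smul_apply, heatPolySection_apply, Complex.real_smul,
    ← Complex.ofReal_mul, ← Complex.ofReal_tsum, (hasSum_heatPoly k _ _).tsum_eq,
    exponentialSolution_apply]

theorem map_exponentialSolution [CompactSpace X] {F : Type*} [NormedAddCommGroup F]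
    [NormedSpace ℂ F] {p q : C(X, ℝ)} {L : C(X, ℂ) →L[ℂ] F}
    (hL : ∀ n, L (heatPolySection p q n) = 0) (k : ℝ) : L (exponentialSolution p q k) = 0 := by
  refine (L.hasSum (hasSum_heatPolySection p q k)).unique ?_
  simp only [L.map_smul_of_tower, hL, smul_zero]
  exact hasSum_zero

end GeneratingFunction

section ParabolicRegularity

/-- The partial derivative `∂w/∂x` of a function of `(x, t)`. -/
noncomputable def spaceDeriv (w : ℝ × ℝ → ℝ) (z : ℝ × ℝ) : ℝ :=
  deriv (fun x => w (x, z.2)) z.1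

/-- The partial derivative `∂w/∂t` of a function of `(x, t)`. -/
noncomputable def timeDeriv (w : ℝ × ℝ → ℝ) (z : ℝ × ℝ) : ℝ :=
  deriv (fun t => w (z.1, t)) z.2

/-- The heat operator `∂w/∂t - ∂²w/∂x²`. -/
noncomputable def heatOperator (w : ℝ × ℝ → ℝ) (z : ℝ × ℝ) : ℝ :=
  timeDeriv w z - spaceDeriv (spaceDeriv w) z

/-- The regularity `C^{2,1}` at `z`: near `z` the function has the derivatives entering
`heatOperator`, and these are continuous at `z`. -/
structure HeatRegularAt (w : ℝ × ℝ → ℝ) (z : ℝ × ℝ) : Prop where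
  differentiableAt_space : ∀ᶠ y in 𝓝 z, DifferentiableAt ℝ (fun x => w (x, y.2)) y.1
  differentiableAt_spaceDeriv :
    ∀ᶠ y in 𝓝 z, DifferentiableAt ℝ (fun x => spaceDeriv w (x, y.2)) y.1
  differentiableAt_time : ∀ᶠ y in 𝓝 z, DifferentiableAt ℝ (fun t => w (y.1, t)) y.2
  continuousAt_spaceDeriv : ContinuousAt (spaceDeriv w) z
  continuousAt_spaceDeriv_spaceDeriv : ContinuousAt (spaceDeriv (spaceDeriv w)) z
  continuousAt_timeDeriv : ContinuousAt (timeDeriv w) z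

variable {v w : ℝ × ℝ → ℝ} {z : ℝ × ℝ}

theorem eventuallyEq_slice_space (h : v =ᶠ[𝓝 z] w) :
    (fun x => v (x, z.2)) =ᶠ[𝓝 z.1] fun x => w (x, z.2) :=
  h.comp_tendsto (Continuous.prodMk_left z.2).continuousAt

theorem eventuallyEq_slice_time (h : v =ᶠ[𝓝 z] w) :
    (fun t => v (z.1, t)) =ᶠ[𝓝 z.2] fun t => w (z.1, t) :=
  h.comp_tendsto (Continuous.prodMk_right z.1).continuousAt

theorem spaceDeriv_eventuallyEq (h : v =ᶠ[𝓝 z] w) : spaceDeriv v =ᶠ[𝓝 z] spaceDeriv w :=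
  h.eventuallyEq_nhds.mono fun _ hy => (eventuallyEq_slice_space hy).deriv_eq

theorem timeDeriv_eventuallyEq (h : v =ᶠ[𝓝 z] w) : timeDeriv v =ᶠ[𝓝 z] timeDeriv w :=
  h.eventuallyEq_nhds.mono fun _ hy => (eventuallyEq_slice_time hy).deriv_eq

theorem heatOperator_eventuallyEq (h : v =ᶠ[𝓝 z] w) : heatOperator v =ᶠ[𝓝 z] heatOperator w :=
  (timeDeriv_eventuallyEq h).sub (spaceDeriv_eventuallyEq (spaceDeriv_eventuallyEq h))

theorem spaceDeriv_mul (hv : DifferentiableAt ℝ (fun x => v (x, z.2)) z.1)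
    (hw : DifferentiableAt ℝ (fun x => w (x, z.2)) z.1) :
    spaceDeriv (v * w) z = spaceDeriv v z * w z + v z * spaceDeriv w z :=
  deriv_mul hv hw

theorem timeDeriv_mul (hv : DifferentiableAt ℝ (fun t => v (z.1, t)) z.2)
    (hw : DifferentiableAt ℝ (fun t => w (z.1, t)) z.2) :
    timeDeriv (v * w) z = timeDeriv v z * w z + v z * timeDeriv w z :=
  deriv_mul hv hw

theorem spaceDeriv_eq_fderiv (hw : Differentiable ℝ w) :
    spaceDeriv w = fun z => fderiv ℝ w z (1, 0) := by
  ext z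
  exact ((hw z).hasFDerivAt.comp_hasDerivAt z.1
    ((hasDerivAt_id z.1).prodMk (hasDerivAt_const z.1 z.2))).deriv

theorem timeDeriv_eq_fderiv (hw : Differentiable ℝ w) :
    timeDeriv w = fun z => fderiv ℝ w z (0, 1) := by
  ext z
  exact ((hw z).hasFDerivAt.comp_hasDerivAt z.2
    ((hasDerivAt_const z.2 z.1).prodMk (hasDerivAt_id z.2))).deriv

theorem heatRegularAt_of_contDiff (hw : ContDiff ℝ 2 w) (z : ℝ × ℝ) : HeatRegularAt w z := by
  have hdiff : Differentiable ℝ w := hw.differentiable two_ne_zero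
  have hfderiv (e : ℝ × ℝ) : ContDiff ℝ 1 fun z => fderiv ℝ w z e :=
    (hw.fderiv_right (by norm_num)).clm_apply contDiff_const
  have hspace : ContDiff ℝ 1 (spaceDeriv w) := spaceDeriv_eq_fderiv hdiff ▸ hfderiv (1, 0)
  have htime : ContDiff ℝ 1 (timeDeriv w) := timeDeriv_eq_fderiv hdiff ▸ hfderiv (0, 1)
  have hspace_diff := hspace.differentiable one_ne_zero
  have hspace2 : Continuous (spaceDeriv (spaceDeriv w)) := by
    rw [spaceDeriv_eq_fderiv hspace_diff]
    exact (hspace.continuous_fderiv one_ne_zero).clm_apply continuous_const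
  exact
    { differentiableAt_space := .of_forall fun y => by fun_prop
      differentiableAt_spaceDeriv := .of_forall fun y => by fun_prop
      differentiableAt_time := .of_forall fun y => by fun_prop
      continuousAt_spaceDeriv := hspace.continuous.continuousAt
      continuousAt_spaceDeriv_spaceDeriv := hspace2.continuousAt
      continuousAt_timeDeriv := htime.continuous.continuousAt }

theorem hasCompactSupport_spaceDeriv (hw : HasCompactSupport w) :
    HasCompactSupport (spaceDeriv w) := by
  refine hw.mono' (Function.support_subset_iff'.2 fun z hz => ?_)
  rw [(spaceDeriv_eventuallyEq (notMem_tsupport_iff_eventuallyEq.1 hz)).eq_of_nhds]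
  exact deriv_const _ _

theorem hasCompactSupport_timeDeriv (hw : HasCompactSupport w) :
    HasCompactSupport (timeDeriv w) := by
  refine hw.mono' (Function.support_subset_iff'.2 fun z hz => ?_)
  rw [(timeDeriv_eventuallyEq (notMem_tsupport_iff_eventuallyEq.1 hz)).eq_of_nhds]
  exact deriv_const _ _

namespace HeatRegularAt

theorem congr_of_eventuallyEq (hw : HeatRegularAt w z) (h : v =ᶠ[𝓝 z] w) : HeatRegularAt v z where
  differentiableAt_space := by
    filter_upwards [hw.differentiableAt_space, h.eventuallyEq_nhds] with y hy hvw
    exact hy.congr_of_eventuallyEq (eventuallyEq_slice_space hvw)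
  differentiableAt_spaceDeriv := by
    filter_upwards [hw.differentiableAt_spaceDeriv, h.eventuallyEq_nhds] with y hy hvw
    exact hy.congr_of_eventuallyEq (eventuallyEq_slice_space (spaceDeriv_eventuallyEq hvw))
  differentiableAt_time := by
    filter_upwards [hw.differentiableAt_time, h.eventuallyEq_nhds] with y hy hvw
    exact hy.congr_of_eventuallyEq (eventuallyEq_slice_time hvw)
  continuousAt_spaceDeriv := hw.continuousAt_spaceDeriv.congr (spaceDeriv_eventuallyEq h).symm
  continuousAt_spaceDeriv_spaceDeriv := hw.continuousAt_spaceDeriv_spaceDeriv.congr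
    (spaceDeriv_eventuallyEq (spaceDeriv_eventuallyEq h)).symm
  continuousAt_timeDeriv := hw.continuousAt_timeDeriv.congr (timeDeriv_eventuallyEq h).symm

theorem hasStrictFDerivAt (hw : HeatRegularAt w z) :
    HasStrictFDerivAt w ((ContinuousLinearMap.toSpanSingleton ℝ (spaceDeriv w z)).coprod
      (ContinuousLinearMap.toSpanSingleton ℝ (timeDeriv w z))) z := by
  have hcont := (ContinuousLinearMap.toSpanSingletonCLE (𝕜 := ℝ) (E := ℝ)).continuous
  exact hasStrictFDerivAt_uncurry_coprod (f := fun x t => w (x, t))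
    (f₁ := fun x t => ContinuousLinearMap.toSpanSingleton ℝ (spaceDeriv w (x, t)))
    (f₂ := fun x t => ContinuousLinearMap.toSpanSingleton ℝ (timeDeriv w (x, t)))
    (hw.differentiableAt_space.mono fun _ h => h.hasDerivAt.hasFDerivAt)
    (hw.differentiableAt_time.mono fun _ h => h.hasDerivAt.hasFDerivAt)
    (hcont.continuousAt.comp hw.continuousAt_spaceDeriv)
    (hcont.continuousAt.comp hw.continuousAt_timeDeriv)

theorem continuousAt (hw : HeatRegularAt w z) : ContinuousAt w z :=
  hw.hasStrictFDerivAt.continuousAt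

theorem continuousAt_heatOperator (hw : HeatRegularAt w z) : ContinuousAt (heatOperator w) z :=
  hw.continuousAt_timeDeriv.sub hw.continuousAt_spaceDeriv_spaceDeriv

theorem hasDerivAt_comp (hw : HeatRegularAt w z) {x t : ℝ → ℝ} {x' t' s : ℝ}
    (hx : HasDerivAt x x' s) (ht : HasDerivAt t t' s) (hz : (x s, t s) = z) :
    HasDerivAt (fun s => w (x s, t s)) (x' * spaceDeriv w z + t' * timeDeriv w z) s := by
  subst hz
  exact hw.hasStrictFDerivAt.hasFDerivAt.comp_hasDerivAt s (hx.prodMk ht)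

theorem mul (hv : HeatRegularAt v z) (hw : HeatRegularAt w z) : HeatRegularAt (v * w) z := by
  have hspace : spaceDeriv (v * w) =ᶠ[𝓝 z] spaceDeriv v * w + v * spaceDeriv w := by
    filter_upwards [hv.differentiableAt_space, hw.differentiableAt_space] with y hvy hwy
    exact spaceDeriv_mul hvy hwy
  have hspace2 : spaceDeriv (spaceDeriv v * w + v * spaceDeriv w) =ᶠ[𝓝 z]
      (spaceDeriv (spaceDeriv v) * w + spaceDeriv v * spaceDeriv w)
        + (spaceDeriv v * spaceDeriv w + v * spaceDeriv (spaceDeriv w)) := by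
    filter_upwards [hv.differentiableAt_space, hv.differentiableAt_spaceDeriv,
      hw.differentiableAt_space, hw.differentiableAt_spaceDeriv] with y hvx hvxx hwx hwxx
    exact ((hvxx.hasDerivAt.mul hwx.hasDerivAt).add (hvx.hasDerivAt.mul hwxx.hasDerivAt)).deriv
  have htime : timeDeriv (v * w) =ᶠ[𝓝 z] timeDeriv v * w + v * timeDeriv w := by
    filter_upwards [hv.differentiableAt_time, hw.differentiableAt_time] with y hvy hwy
    exact timeDeriv_mul hvy hwy
  refine ⟨?_, ?_, ?_, ?_, ?_, ?_⟩
  · filter_upwards [hv.differentiableAt_space, hw.differentiableAt_space] with y hvy hwy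
    exact hvy.mul hwy
  · filter_upwards [hv.differentiableAt_space, hv.differentiableAt_spaceDeriv,
      hw.differentiableAt_space, hw.differentiableAt_spaceDeriv, hspace.eventuallyEq_nhds]
      with y hvx hvxx hwx hwxx hy
    exact ((hvxx.mul hwx).add (hvx.mul hwxx)).congr_of_eventuallyEq (eventuallyEq_slice_space hy)
  · filter_upwards [hv.differentiableAt_time, hw.differentiableAt_time] with y hvy hwy
    exact hvy.mul hwy
  · exact ((hv.continuousAt_spaceDeriv.mul hw.continuousAt).add
      (hv.continuousAt.mul hw.continuousAt_spaceDeriv)).congr hspace.symm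
  · exact (((hv.continuousAt_spaceDeriv_spaceDeriv.mul hw.continuousAt).add
      (hv.continuousAt_spaceDeriv.mul hw.continuousAt_spaceDeriv)).add
      ((hv.continuousAt_spaceDeriv.mul hw.continuousAt_spaceDeriv).add
      (hv.continuousAt.mul hw.continuousAt_spaceDeriv_spaceDeriv))).congr
      ((spaceDeriv_eventuallyEq hspace).trans hspace2).symm
  · exact ((hv.continuousAt_timeDeriv.mul hw.continuousAt).add
      (hv.continuousAt.mul hw.continuousAt_timeDeriv)).congr htime.symm

end HeatRegularAt

theorem exists_contDiff_hasCompactSupport_eventuallyEq_one {E : Type*} [NormedAddCommGroup E]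
    [NormedSpace ℝ E] [FiniteDimensional ℝ E] {K D : Set E} (hK : IsCompact K) (hD : IsOpen D)
    (hKD : K ⊆ D) (n : ℕ∞) :
    ∃ φ : E → ℝ, ContDiff ℝ n φ ∧ HasCompactSupport φ ∧ tsupport φ ⊆ D ∧ φ =ᶠ[𝓝ˢ K] 1 := by
  obtain ⟨M, hM, hKM, hMD⟩ := exists_compact_between hK hD hKD
  obtain ⟨φ, hone, hzero, -⟩ := exists_contMDiffMap_one_nhds_of_subset_interior (n := n)
    (modelWithCornersSelf ℝ E) hK.isClosed hKM
  have hsupport : tsupport φ ⊆ M :=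
    closure_minimal (Function.support_subset_iff'.2 hzero) hM.isClosed
  exact ⟨φ, φ.contMDiff.contDiff, hM.of_isClosed_subset (isClosed_tsupport _) hsupport,
    hsupport.trans hMD, hone⟩

theorem exists_heatRegularAt_hasCompactSupport_eventuallyEq {K D : Set (ℝ × ℝ)} (hK : IsCompact K)
    (hD : IsOpen D) (hKD : K ⊆ D) {u : ℝ × ℝ → ℝ} (hu : ∀ z ∈ D, HeatRegularAt u z) :
    ∃ w : ℝ × ℝ → ℝ, (∀ z, HeatRegularAt w z) ∧ HasCompactSupport w ∧ w =ᶠ[𝓝ˢ K] u := by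
  obtain ⟨φ, hφ, hφ_compact, hφD, hφK⟩ :=
    exists_contDiff_hasCompactSupport_eventuallyEq_one hK hD hKD 2
  refine ⟨φ * u, fun z => ?_, hφ_compact.mul_right, ?_⟩
  · by_cases hz : z ∈ tsupport φ
    · exact (heatRegularAt_of_contDiff hφ z).mul (hu z (hφD hz))
    · refine (heatRegularAt_of_contDiff (contDiff_const (c := 0)) z).congr_of_eventuallyEq ?_
      filter_upwards [notMem_tsupport_iff_eventuallyEq.1 hz] with y hy
      rw [Pi.mul_apply, hy, Pi.zero_apply, zero_mul]
  · filter_upwards [hφK] with z hz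
    rw [Pi.mul_apply, hz, Pi.one_apply, one_mul]

end ParabolicRegularity

section GaussianAverage

open ProbabilityTheory

theorem integrable_gaussianReal_iff {E : Type*} [NormedAddCommGroup E] [NormedSpace ℝ E] {μ : ℝ}
    {v : NNReal} (hv : v ≠ 0) {f : ℝ → E} :
    Integrable f (gaussianReal μ v) ↔ Integrable fun x => gaussianPDFReal μ v x • f x := by
  rw [gaussianReal_of_var_ne_zero μ hv, integrable_withDensity_iff_integrable_smul'
    (measurable_gaussianPDF μ v) (ae_of_all _ fun _ => gaussianPDF_lt_top)]
  simp only [toReal_gaussianPDF]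

theorem hasDerivAt_gaussianPDFReal (μ : ℝ) (v : NNReal) (x : ℝ) :
    HasDerivAt (gaussianPDFReal μ v) (-((x - μ) / v) * gaussianPDFReal μ v x) x := by
  have hsq := (((((hasDerivAt_id x).sub_const μ).pow 2).neg.div_const (2 * (v : ℝ))).exp).const_mul
    (√(2 * Real.pi * v))⁻¹
  refine hsq.congr_deriv ?_
  simp only [gaussianPDFReal, id_eq, Pi.neg_apply, Pi.pow_apply]
  ring

-- Stein's identity.
theorem integral_sub_mul_gaussianReal {μ : ℝ} {v : NNReal} {φ φ' : ℝ → ℝ}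
    (hφ : ∀ x, HasDerivAt φ (φ' x) x) (hint : Integrable φ (gaussianReal μ v))
    (hint' : Integrable φ' (gaussianReal μ v))
    (hmul : Integrable (fun x => (x - μ) * φ x) (gaussianReal μ v)) :
    ∫ x, (x - μ) * φ x ∂gaussianReal μ v = v * ∫ x, φ' x ∂gaussianReal μ v := by
  rcases eq_or_ne v 0 with rfl | hv
  · simp
  have hv' : (v : ℝ) ≠ 0 := NNReal.coe_ne_zero.2 hv
  rw [integrable_gaussianReal_iff hv] at hint hint' hmul
  have hparts := integral_mul_deriv_eq_deriv_mul_of_integrable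
    (fun x _ => hasDerivAt_gaussianPDFReal μ v x) (fun x _ => hφ x) hint'
    ((hmul.const_mul (-(v : ℝ)⁻¹)).congr (ae_of_all _ fun x => by
      simp only [smul_eq_mul, Pi.mul_apply]; ring)) hint
  simp only [integral_gaussianReal_eq_integral_smul hv, smul_eq_mul]
  rw [hparts, ← integral_neg, ← integral_const_mul]
  congr with x
  field_simp

/-- The average of `g` over the points `(x - s r, t - s²)`, where `r` is centred Gaussian of
variance `2`; this is the convolution of `g (·, t - s²)` with the heat kernel at time `s²`. -/
noncomputable def gaussianAverage (g : ℝ × ℝ → ℝ) (z : ℝ × ℝ) (s : ℝ) : ℝ :=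
  ∫ r, g (z.1 - s * r, z.2 - s ^ 2) ∂gaussianReal 0 2

variable {g w : ℝ × ℝ → ℝ}

theorem gaussianAverage_zero (g : ℝ × ℝ → ℝ) (z : ℝ × ℝ) : gaussianAverage g z 0 = g z := by
  simp only [gaussianAverage, zero_mul, sub_zero, ne_eq, OfNat.ofNat_ne_zero, not_false_eq_true,
    zero_pow, integral_const, probReal_univ, one_smul]

theorem gaussianAverage_eq_integral_heatKernel (g : ℝ × ℝ → ℝ) (z : ℝ × ℝ) {s : ℝ} (hs : s ≠ 0) :
    gaussianAverage g z s = ∫ η, heatKernel (z.1 - η) (s ^ 2) * g (η, z.2 - s ^ 2) := by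
  have hdensity (r : ℝ) : gaussianPDFReal 0 2 r = |s| * heatKernel (s * r) (s ^ 2) := by
    have hexp : -(s * r) ^ 2 / (4 * s ^ 2) = -r ^ 2 / (2 * 2) := by field_simp; ring
    have hsqrt : √(4 * Real.pi * s ^ 2) = |s| * √(2 * Real.pi * 2) := by
      rw [← Real.sqrt_sq_eq_abs, ← Real.sqrt_mul (sq_nonneg s)]; ring_nf
    simp only [gaussianPDFReal, heatKernel, hexp, hsqrt, sub_zero, NNReal.coe_ofNat]
    field_simp
  rw [gaussianAverage, integral_gaussianReal_eq_integral_smul two_ne_zero,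
    ← integral_sub_left_eq_self (fun η => heatKernel (z.1 - η) (s ^ 2) * g (η, z.2 - s ^ 2)) _ z.1]
  simp only [hdensity, smul_eq_mul, mul_assoc, sub_sub_cancel, integral_const_mul,
    Measure.integral_comp_mul_left (fun η => heatKernel η (s ^ 2) * g (z.1 - η, z.2 - s ^ 2)) s]
  rw [abs_inv, mul_inv_cancel_left₀ (abs_ne_zero.2 hs)]

theorem integrable_comp_gaussianReal (hg : Continuous g) (hsupp : HasCompactSupport g) (z : ℝ × ℝ)
    (s : ℝ) : Integrable (fun r => g (z.1 - s * r, z.2 - s ^ 2)) (gaussianReal 0 2) := by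
  obtain ⟨C, hC⟩ := hg.bounded_above_of_compact_support hsupp
  exact .of_bound (by fun_prop) C (ae_of_all _ fun r => hC _)

theorem integrable_mul_comp_gaussianReal (hg : Continuous g) (hsupp : HasCompactSupport g)
    (z : ℝ × ℝ) (s : ℝ) :
    Integrable (fun r => r * g (z.1 - s * r, z.2 - s ^ 2)) (gaussianReal 0 2) := by
  obtain ⟨C, hC⟩ := hg.bounded_above_of_compact_support hsupp
  exact ((memLp_id_gaussianReal 1).integrable le_rfl).mul_bdd (c := C) (by fun_prop)
    (ae_of_all _ fun r => hC _)

theorem continuous_gaussianAverage (hg : Continuous g) (hsupp : HasCompactSupport g) (z : ℝ × ℝ) :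
    Continuous (gaussianAverage g z) := by
  obtain ⟨C, hC⟩ := hg.bounded_above_of_compact_support hsupp
  exact continuous_of_dominated (fun s => by fun_prop) (fun s => ae_of_all _ fun r => hC _)
    (integrable_const C) (ae_of_all _ fun r => by fun_prop)

theorem hasCompactSupport_gaussianAverage (hsupp : HasCompactSupport g) (z : ℝ × ℝ) :
    HasCompactSupport (gaussianAverage g z) := by
  obtain ⟨R, hR⟩ := (hsupp.isCompact.image continuous_snd).bddBelow
  refine .intro (isCompact_Icc (a := -√(z.2 - R)) (b := √(z.2 - R))) fun s hs => ?_
  have hs' : z.2 - s ^ 2 < R := by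
    by_contra! h
    exact hs (abs_le.1 (Real.abs_le_sqrt (by linarith)))
  have hzero (r : ℝ) : g (z.1 - s * r, z.2 - s ^ 2) = 0 :=
    image_eq_zero_of_notMem_tsupport fun h => hs'.not_ge (hR (mem_image_of_mem _ h))
  simp only [gaussianAverage, hzero, integral_zero]

theorem hasCompactSupport_heatOperator (hsupp : HasCompactSupport w) :
    HasCompactSupport (heatOperator w) :=
  (hasCompactSupport_timeDeriv hsupp).sub
    (hasCompactSupport_spaceDeriv (hasCompactSupport_spaceDeriv hsupp))

section HeatOperator

variable (hw : ∀ z, HeatRegularAt w z) (hsupp : HasCompactSupport w)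
include hw hsupp

theorem hasDerivAt_gaussianAverage_spaceDeriv_timeDeriv (z : ℝ × ℝ) (s : ℝ) :
    HasDerivAt (gaussianAverage w z) (∫ r, (-r * spaceDeriv w (z.1 - s * r, z.2 - s ^ 2)
      + -(2 * s) * timeDeriv w (z.1 - s * r, z.2 - s ^ 2)) ∂gaussianReal 0 2) s := by
  have hcw : Continuous w := continuous_iff_continuousAt.2 fun z => (hw z).continuousAt
  have hcx : Continuous (spaceDeriv w) :=
    continuous_iff_continuousAt.2 fun z => (hw z).continuousAt_spaceDeriv
  have hct : Continuous (timeDeriv w) :=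
    continuous_iff_continuousAt.2 fun z => (hw z).continuousAt_timeDeriv
  obtain ⟨Cx, hCx⟩ := hcx.bounded_above_of_compact_support (hasCompactSupport_spaceDeriv hsupp)
  obtain ⟨Ct, hCt⟩ := hct.bounded_above_of_compact_support (hasCompactSupport_timeDeriv hsupp)
  have hid : Integrable (fun r : ℝ => r) (gaussianReal 0 2) :=
    (memLp_id_gaussianReal 1).integrable le_rfl
  refine (hasDerivAt_integral_of_dominated_loc_of_deriv_le
    (F' := fun s r => -r * spaceDeriv w (z.1 - s * r, z.2 - s ^ 2)
      + -(2 * s) * timeDeriv w (z.1 - s * r, z.2 - s ^ 2))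
    (bound := fun r => |r| * Cx + 2 * (|s| + 1) * Ct) (Metric.ball_mem_nhds s one_pos)
    (.of_forall fun s => by fun_prop) (integrable_comp_gaussianReal hcw hsupp z s)
    (by fun_prop) (ae_of_all _ fun r σ hσ => ?_)
    ((hid.abs.mul_const Cx).add (integrable_const _)) (ae_of_all _ fun r σ _ => ?_)).2
  · have hσ' : |σ| ≤ |s| + 1 := by
      linarith [abs_sub_abs_le_abs_sub σ s, (Metric.mem_ball.1 hσ).le.trans_eq' (Real.dist_eq σ s)]
    refine (norm_add_le _ _).trans ?_
    rw [norm_mul, norm_mul, norm_neg, norm_neg, norm_mul, Real.norm_two]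
    simp only [Real.norm_eq_abs] at *
    gcongr
    · exact hCx _
    · exact hCt _
  · refine (hw _).hasDerivAt_comp ?_ ?_ rfl
    · simpa only [id_eq, one_mul] using ((hasDerivAt_id σ).mul_const r).const_sub z.1
    · simpa using ((hasDerivAt_id σ).pow 2).const_sub z.2

theorem hasDerivAt_gaussianAverage (z : ℝ × ℝ) (s : ℝ) :
    HasDerivAt (gaussianAverage w z) (-(2 * s) * gaussianAverage (heatOperator w) z s) s := by
  have hcx : Continuous (spaceDeriv w) :=
    continuous_iff_continuousAt.2 fun z => (hw z).continuousAt_spaceDeriv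
  have hcxx : Continuous (spaceDeriv (spaceDeriv w)) :=
    continuous_iff_continuousAt.2 fun z => (hw z).continuousAt_spaceDeriv_spaceDeriv
  have hct : Continuous (timeDeriv w) :=
    continuous_iff_continuousAt.2 fun z => (hw z).continuousAt_timeDeriv
  have hsx := hasCompactSupport_spaceDeriv hsupp
  have hint_x := integrable_comp_gaussianReal hcx hsx z s
  have hint_xx := integrable_comp_gaussianReal hcxx (hasCompactSupport_spaceDeriv hsx) z s
  have hint_t := integrable_comp_gaussianReal hct (hasCompactSupport_timeDeriv hsupp) z s
  have hint_rx := integrable_mul_comp_gaussianReal hcx hsx z s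
  have hslice (r : ℝ) : HasDerivAt (fun r => spaceDeriv w (z.1 - s * r, z.2 - s ^ 2))
      (spaceDeriv (spaceDeriv w) (z.1 - s * r, z.2 - s ^ 2) * -s) r := by
    have hline : HasDerivAt (fun r => z.1 - s * r) (-s) r := by
      simpa only [id_eq, mul_one] using ((hasDerivAt_id r).const_mul s).const_sub z.1
    exact (hw (z.1 - s * r, z.2 - s ^ 2)).differentiableAt_spaceDeriv.self_of_nhds.hasDerivAt.comp
      r hline
  have hstein := integral_sub_mul_gaussianReal hslice hint_x (hint_xx.mul_const _)
    (by simpa only [sub_zero] using hint_rx)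
  simp only [sub_zero, integral_mul_const, NNReal.coe_ofNat] at hstein
  refine (hasDerivAt_gaussianAverage_spaceDeriv_timeDeriv hw hsupp z s).congr_deriv ?_
  have hsum := integral_add hint_rx.fun_neg (hint_t.const_mul (-(2 * s)))
  rw [integral_neg, hstein, integral_const_mul] at hsum
  simp only [neg_mul _ (spaceDeriv w _), hsum, gaussianAverage, heatOperator,
    integral_sub hint_t hint_xx]
  ring

theorem integral_Ioi_gaussianAverage_heatOperator (z : ℝ × ℝ) :
    ∫ s in Ioi 0, 2 * s * gaussianAverage (heatOperator w) z s = w z := by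
  have hderiv := hasDerivAt_gaussianAverage hw hsupp z
  have hcont : Continuous (heatOperator w) :=
    continuous_iff_continuousAt.2 fun z => (hw z).continuousAt_heatOperator
  have havg := continuous_gaussianAverage hcont (hasCompactSupport_heatOperator hsupp) z
  have hC1 : ContDiff ℝ 1 (gaussianAverage w z) := by
    refine contDiff_one_iff_deriv.2 ⟨fun s => (hderiv s).differentiableAt, ?_⟩
    rw [funext fun s => (hderiv s).deriv]
    fun_prop
  have hftc := (hasCompactSupport_gaussianAverage hsupp z).integral_Ioi_deriv_eq hC1 0
  simp only [(hderiv _).deriv, neg_mul, integral_neg, gaussianAverage_zero, neg_inj] at hftc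
  exact hftc

theorem integral_heatKernel_mul_heatOperator (z : ℝ × ℝ)
    (hint : Integrable fun y : ℝ × ℝ => heatKernel (z.1 - y.1) (z.2 - y.2) * heatOperator w y) :
    ∫ y : ℝ × ℝ, heatKernel (z.1 - y.1) (z.2 - y.2) * heatOperator w y = w z := by
  set F : ℝ → ℝ := fun t => ∫ η, heatKernel (z.1 - η) t * heatOperator w (η, z.2 - t) with hF
  calc ∫ y : ℝ × ℝ, heatKernel (z.1 - y.1) (z.2 - y.2) * heatOperator w y
      = ∫ τ, ∫ η, heatKernel (z.1 - η) (z.2 - τ) * heatOperator w (η, τ) :=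
        integral_prod_symm _ hint
    _ = ∫ t, F t := by
        rw [← integral_sub_left_eq_self _ volume z.2]
        simp only [hF, sub_sub_cancel]
    _ = ∫ t in Ioi 0, F t := by
        refine (setIntegral_eq_integral_of_forall_compl_eq_zero fun t ht => ?_).symm
        simp only [hF, heatKernel_of_nonpos _ (notMem_Ioi.1 ht), zero_mul, integral_zero]
    _ = ∫ s in Ioi 0, 2 * s * gaussianAverage (heatOperator w) z s := by
        rw [← integral_Ioi_comp_sq_smul]
        refine setIntegral_congr_fun measurableSet_Ioi fun s hs => ?_
        rw [gaussianAverage_eq_integral_heatKernel _ z (ne_of_gt hs), smul_eq_mul]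
    _ = w z := integral_Ioi_gaussianAverage_heatOperator hw hsupp z

end HeatOperator

end GaussianAverage

section Approximation

theorem exists_abs_sub_sum_heatPoly_lt {X : Type*} [TopologicalSpace X] [CompactSpace X]
    {p q : C(X, ℝ)} {φ : C(X, ℂ)}
    (hφ : φ ∈ (Submodule.span ℂ (range (heatPolySection p q))).topologicalClosure)
    {ε : ℝ} (hε : 0 < ε) : ∃ (N : ℕ) (a : ℕ → ℝ), ∀ x,
      |(φ x).re - ∑ n ∈ Finset.range (N + 1), a n * heatPoly n (p x) (q x)| < ε := by
  obtain ⟨ψ, hψ, hdist⟩ := Metric.mem_closure_iff.1 hφ ε hε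
  obtain ⟨c, rfl⟩ := Finsupp.mem_span_range_iff_exists_finsupp.1 hψ
  have hsupp : c.support ⊆ Finset.range (c.support.sup id + 1) := fun n hn =>
    Finset.mem_range_succ_iff.2 (Finset.le_sup (f := id) hn)
  rw [Finsupp.sum_of_support_subset c hsupp _ fun n _ => zero_smul ℂ (heatPolySection p q n),
    dist_eq_norm] at hdist
  refine ⟨c.support.sup id, fun n => (c n).re, fun x => ?_⟩
  calc |(φ x).re - ∑ n ∈ Finset.range (c.support.sup id + 1), (c n).re * heatPoly n (p x) (q x)|
      = |((φ - ∑ n ∈ Finset.range (c.support.sup id + 1), c n • heatPolySection p q n) x).re| := by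
        simp only [ContinuousMap.sub_apply, ContinuousMap.sum_apply, ContinuousMap.smul_apply,
          heatPolySection_apply, smul_eq_mul, Complex.sub_re, Complex.re_sum, Complex.re_mul_ofReal]
    _ ≤ ‖φ - ∑ n ∈ Finset.range (c.support.sup id + 1), c n • heatPolySection p q n‖ :=
        (Complex.abs_re_le_norm _).trans (ContinuousMap.norm_coe_le_norm _ x)
    _ < ε := hdist

/-- The space coordinate on `K`. -/
def spaceCoordinate (K : Set (ℝ × ℝ)) : C(K, ℝ) :=
  ⟨fun x => x.1.1, by fun_prop⟩

/-- The time coordinate on `K`. -/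
def timeCoordinate (K : Set (ℝ × ℝ)) : C(K, ℝ) :=
  ⟨fun x => x.1.2, by fun_prop⟩

/-- The restriction to `K` of the heat kernel with pole `z`; meaningful for `z ∉ K`. -/
noncomputable def realPoleKernel (K : Set (ℝ × ℝ)) (z : ℝ × ℝ) : C(K, ℂ) :=
  kernelSection (spaceCoordinate K) (timeCoordinate K) (z.1, z.2)

variable {K : Set (ℝ × ℝ)} {z : ℝ × ℝ} {f w : ℝ × ℝ → ℝ}

theorem mem_regularPoles_of_notMem (hz : z ∉ K) :
    ((z.1 : ℂ), z.2) ∈ regularPoles (spaceCoordinate K) (timeCoordinate K) := by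
  rintro ⟨x, hx⟩ (hxz : x.2 = z.2)
  have hne : x.1 - z.1 ≠ 0 := fun h => hz (Prod.ext (sub_eq_zero.1 h) hxz ▸ hx)
  change 0 < (((x.1 : ℂ) - z.1) ^ 2).re
  exact_mod_cast sq_pos_of_ne_zero hne

theorem realPoleKernel_apply (hz : z ∉ K) (x : K) :
    realPoleKernel K z x = (heatKernel (x.1.1 - z.1) (x.1.2 - z.2) : ℝ) := by
  rw [realPoleKernel, kernelSection_apply (mem_regularPoles_of_notMem hz), ofReal_heatKernel,
    Complex.ofReal_sub]
  rfl

theorem map_realPoleKernel [CompactSpace K] {F : Type*} [NormedAddCommGroup F] [NormedSpace ℂ F]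
    [CompleteSpace F] {L : C(K, ℂ) →L[ℂ] F}
    (hL : ∀ n, L (heatPolySection (spaceCoordinate K) (timeCoordinate K) n) = 0)
    (hK : HorizontallyConvex K) (hz : z ∉ K) : L (realPoleKernel K z) = 0 := by
  have hexp := map_exponentialSolution hL
  rcases hK.forall_lt_or_forall_gt hz with h | h
  · exact map_kernelSection_of_slice_lt hexp fun x hx => h x.1.1 (hx ▸ x.2)
  · exact map_kernelSection_of_lt_slice hexp fun x hx => h x.1.1 (hx ▸ x.2)

theorem continuousOn_realPoleKernel [CompactSpace K] : ContinuousOn (realPoleKernel K) Kᶜ :=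
  (continuousOn_kernelSection _ _).comp (by fun_prop) fun _ => mem_regularPoles_of_notMem

theorem continuous_smul_realPoleKernel [CompactSpace K] (hf : Continuous f)
    (hfK : f =ᶠ[𝓝ˢ K] 0) : Continuous fun z => f z • realPoleKernel K z := by
  refine continuous_iff_continuousAt.2 fun z => ?_
  by_cases hz : z ∈ K
  · refine (continuousAt_const (y := 0)).congr ?_
    filter_upwards [eventually_nhdsSet_iff_forall.1 hfK z hz] with y hy
    rw [hy, Pi.zero_apply, zero_smul]
  · have hopen : IsOpen Kᶜ := (isCompact_iff_compactSpace.2 ‹_›).isClosed.isOpen_compl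
    exact hf.continuousAt.smul (continuousOn_realPoleKernel.continuousAt (hopen.mem_nhds hz))

theorem integrable_smul_realPoleKernel [CompactSpace K] (hf : Continuous f)
    (hsupp : HasCompactSupport f) (hfK : f =ᶠ[𝓝ˢ K] 0) :
    Integrable fun z => f z • realPoleKernel K z :=
  (continuous_smul_realPoleKernel hf hfK).integrable_of_hasCompactSupport hsupp.smul_right

theorem smul_realPoleKernel_apply (hfK : EqOn f 0 K) (z : ℝ × ℝ) (x : K) :
    (f z • realPoleKernel K z) x
      = ((heatKernel (x.1.1 - z.1) (x.1.2 - z.2) * f z : ℝ) : ℂ) := by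
  rw [ContinuousMap.smul_apply, Complex.real_smul, Complex.ofReal_mul, mul_comm]
  by_cases hz : z ∈ K
  · rw [hfK hz, Pi.zero_apply, Complex.ofReal_zero, mul_zero, mul_zero]
  · rw [realPoleKernel_apply hz]

theorem integral_heatOperator_smul_realPoleKernel [CompactSpace K] (hw : ∀ z, HeatRegularAt w z)
    (hsupp : HasCompactSupport w) (hwK : heatOperator w =ᶠ[𝓝ˢ K] 0) (x : K) :
    (∫ z, heatOperator w z • realPoleKernel K z) x = w x := by
  have hint := integrable_smul_realPoleKernel
    (continuous_iff_continuousAt.2 fun z => (hw z).continuousAt_heatOperator)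
    (hasCompactSupport_heatOperator hsupp) hwK
  have happly (z) := smul_realPoleKernel_apply hwK.self_of_nhdsSet z x
  have hreal := ((ContinuousMap.evalCLM ℂ x).integrable_comp hint).re
  simp only [ContinuousMap.evalCLM_apply, happly] at hreal
  rw [ContinuousMap.integral_apply hint, integral_congr_ae (ae_of_all _ happly),
    integral_complex_ofReal, integral_heatKernel_mul_heatOperator hw hsupp x.1 hreal]

theorem integral_smul_realPoleKernel_mem [CompactSpace K] (hK : HorizontallyConvex K)
    (hf : Continuous f) (hsupp : HasCompactSupport f) (hfK : f =ᶠ[𝓝ˢ K] 0) :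
    ∫ z, f z • realPoleKernel K z ∈ (Submodule.span ℂ
      (range (heatPolySection (spaceCoordinate K) (timeCoordinate K)))).topologicalClosure := by
  set S := (Submodule.span ℂ
    (range (heatPolySection (spaceCoordinate K) (timeCoordinate K)))).topologicalClosure
  have : IsClosed (S : Set C(K, ℂ)) := Submodule.isClosed_topologicalClosure _
  have hL (n : ℕ) : S.mkQL (heatPolySection (spaceCoordinate K) (timeCoordinate K) n) = 0 :=
    (Submodule.Quotient.mk_eq_zero S).2
      (Submodule.le_topologicalClosure _ (Submodule.subset_span (mem_range_self n)))
  have hzero (z : ℝ × ℝ) : S.mkQL (f z • realPoleKernel K z) = 0 := by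
    by_cases hz : z ∈ K
    · rw [hfK.self_of_nhdsSet hz, Pi.zero_apply, zero_smul, map_zero]
    · rw [S.mkQL.map_smul_of_tower, map_realPoleKernel hL hK hz, smul_zero]
  refine (Submodule.Quotient.mk_eq_zero S).1 ?_
  calc S.mkQL (∫ z, f z • realPoleKernel K z) = ∫ z, S.mkQL (f z • realPoleKernel K z) :=
        (S.mkQL.integral_comp_comm (integrable_smul_realPoleKernel hf hsupp hfK)).symm
    _ = 0 := by simp only [hzero, integral_zero]

theorem exists_abs_sub_sum_heatPoly_lt_of_hasCompactSupport (hw : ∀ z, HeatRegularAt w z)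
    (hsupp : HasCompactSupport w) (hK : IsCompact K) (hconv : HorizontallyConvex K)
    (hwK : heatOperator w =ᶠ[𝓝ˢ K] 0) {ε : ℝ} (hε : 0 < ε) :
    ∃ (N : ℕ) (a : ℕ → ℝ), ∀ z ∈ K,
      |w z - ∑ n ∈ Finset.range (N + 1), a n * heatPoly n z.1 z.2| < ε := by
  have : CompactSpace K := isCompact_iff_compactSpace.1 hK
  obtain ⟨N, a, h⟩ := exists_abs_sub_sum_heatPoly_lt (integral_smul_realPoleKernel_mem hconv
    (continuous_iff_continuousAt.2 fun z => (hw z).continuousAt_heatOperator)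
    (hasCompactSupport_heatOperator hsupp) hwK) hε
  refine ⟨N, a, fun z hz => ?_⟩
  have hx := h ⟨z, hz⟩
  rwa [integral_heatOperator_smul_realPoleKernel hw hsupp hwK, Complex.ofReal_re] at hx

end Approximation

section Domain

theorem heatRegularAt_of_forall_mem {D : Set (ℝ × ℝ)} (hD : IsOpen D) {u : ℝ × ℝ → ℝ}
    (hdx : ∀ z ∈ D, DifferentiableAt ℝ (fun y => u (y, z.2)) z.1)
    (hdxx : ∀ z ∈ D, DifferentiableAt ℝ (fun y => spaceDeriv u (y, z.2)) z.1)
    (hdt : ∀ z ∈ D, DifferentiableAt ℝ (fun t => u (z.1, t)) z.2)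
    (hcx : ContinuousOn (spaceDeriv u) D) (hcxx : ContinuousOn (spaceDeriv (spaceDeriv u)) D)
    (hct : ContinuousOn (timeDeriv u) D) {z : ℝ × ℝ} (hz : z ∈ D) : HeatRegularAt u z where
  differentiableAt_space := eventually_of_mem (hD.mem_nhds hz) hdx
  differentiableAt_spaceDeriv := eventually_of_mem (hD.mem_nhds hz) hdxx
  differentiableAt_time := eventually_of_mem (hD.mem_nhds hz) hdt
  continuousAt_spaceDeriv := hcx.continuousAt (hD.mem_nhds hz)
  continuousAt_spaceDeriv_spaceDeriv := hcxx.continuousAt (hD.mem_nhds hz)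
  continuousAt_timeDeriv := hct.continuousAt (hD.mem_nhds hz)

theorem exists_abs_sub_sum_heatPoly_lt_of_heatOperator_eq_zero {D : Set (ℝ × ℝ)} (hD : IsOpen D)
    (hconv : HorizontallyConvex D) {u : ℝ × ℝ → ℝ} (hu : ∀ z ∈ D, HeatRegularAt u z)
    (hheat : EqOn (heatOperator u) 0 D) {K : Set (ℝ × ℝ)} (hK : IsCompact K) (hKD : K ⊆ D)
    {ε : ℝ} (hε : 0 < ε) : ∃ (N : ℕ) (a : ℕ → ℝ), ∀ z ∈ K,
      |u z - ∑ n ∈ Finset.range (N + 1), a n * heatPoly n z.1 z.2| < ε := by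
  have hhull : horizontalHull K ⊆ D := hconv.horizontalHull_subset hKD
  obtain ⟨w, hw, hsupp, hwu⟩ := exists_heatRegularAt_hasCompactSupport_eventuallyEq
    (isCompact_horizontalHull hK) hD hhull hu
  have hwK : heatOperator w =ᶠ[𝓝ˢ (horizontalHull K)] 0 :=
    eventually_nhdsSet_iff_forall.2 fun z hz =>
      (heatOperator_eventuallyEq (eventually_nhdsSet_iff_forall.1 hwu z hz)).trans
        (hheat.eventuallyEq_of_mem (hD.mem_nhds (hhull hz)))
  obtain ⟨N, a, h⟩ := exists_abs_sub_sum_heatPoly_lt_of_hasCompactSupport hw hsupp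
    (isCompact_horizontalHull hK) (horizontallyConvex_horizontalHull K) hwK hε
  exact ⟨N, a, fun z hz => hwu.self_of_nhdsSet (subset_horizontalHull K hz) ▸
    h z (subset_horizontalHull K hz)⟩

theorem horizontallyConvex_regionUnderGraph (s : ℝ → ℝ) (T : ℝ) :
    HorizontallyConvex {z : ℝ × ℝ | 0 < z.1 ∧ z.1 < s z.2 ∧ 0 < z.2 ∧ z.2 < T} :=
  fun _ => ⟨fun _ h₁ _ h₂ _ hy => ⟨h₁.1.trans_le hy.1, hy.2.trans_lt h₂.2.1, h₁.2.2⟩⟩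

theorem isOpen_regionUnderGraph {s : ℝ → ℝ} {T : ℝ} (hs : ContinuousOn s (Icc 0 T)) :
    IsOpen {z : ℝ × ℝ | 0 < z.1 ∧ z.1 < s z.2 ∧ 0 < z.2 ∧ z.2 < T} := by
  have hstrip : IsOpen (Prod.snd ⁻¹' Ioo 0 T : Set (ℝ × ℝ)) := isOpen_Ioo.preimage continuous_snd
  have hsub : ContinuousOn (fun z : ℝ × ℝ => s z.2 - z.1) (Prod.snd ⁻¹' Ioo 0 T) :=
    ((hs.mono Ioo_subset_Icc_self).comp continuousOn_snd fun _ hz => hz).sub continuousOn_fst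
  have hopen := (hsub.isOpen_inter_preimage hstrip (isOpen_Ioi (a := 0))).inter
    (isOpen_Ioi.preimage continuous_fst : IsOpen (Prod.fst ⁻¹' Ioi 0 : Set (ℝ × ℝ)))
  convert hopen using 1
  ext z
  simp only [mem_ofPred_eq, mem_inter_iff, mem_preimage, mem_Ioo, mem_Ioi, sub_pos]
  tauto

end Domain

end HeatPolynomial

theorem heatPoly_complete_system_general {D : Set (ℝ × ℝ)} (hD : IsOpen D)
    (hconv : HeatPolynomial.HorizontallyConvex D) (u : ℝ × ℝ → ℝ)
    (hdx : ∀ z ∈ D, DifferentiableAt ℝ (fun y => u (y, z.2)) z.1)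
    (hdxx : ∀ z ∈ D, DifferentiableAt ℝ (fun y => deriv (fun y' => u (y', z.2)) y) z.1)
    (hdt : ∀ z ∈ D, DifferentiableAt ℝ (fun t => u (z.1, t)) z.2)
    (hcx : ContinuousOn (fun z : ℝ × ℝ => deriv (fun y => u (y, z.2)) z.1) D)
    (hcxx : ContinuousOn
      (fun z : ℝ × ℝ => deriv (fun y => deriv (fun y' => u (y', z.2)) y) z.1) D)
    (hheat : ∀ z ∈ D,
      deriv (fun y => deriv (fun y' => u (y', z.2)) y) z.1
        = deriv (fun t => u (z.1, t)) z.2)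
    {K : Set (ℝ × ℝ)} (hK : IsCompact K) (hKD : K ⊆ D) {ε : ℝ} (hε : 0 < ε) :
    ∃ (N : ℕ) (a : ℕ → ℝ), ∀ z ∈ K,
      |u z - ∑ n ∈ Finset.range (N + 1), a n * heatPoly n z.1 z.2| < ε := by
  have hct : ContinuousOn (HeatPolynomial.timeDeriv u) D := hcxx.congr fun z hz => (hheat z hz).symm
  have hzero : Set.EqOn (HeatPolynomial.heatOperator u) 0 D := fun z hz =>
    sub_eq_zero.2 (hheat z hz).symm
  have hu (z) (hz : z ∈ D) :=
    HeatPolynomial.heatRegularAt_of_forall_mem hD hdx hdxx hdt hcx hcxx hct hz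
  exact HeatPolynomial.exists_abs_sub_sum_heatPoly_lt_of_heatOperator_eq_zero hD hconv hu hzero
    hK hKD hε

/-- The heat polynomials form a complete system of solutions of the heat equation on
the domain `D(s) = {(y,t) : 0 < y < s(t), 0 < t < T}`: any classical solution of
`u_yy = u_t` on `D(s)` can be uniformly approximated on every compact subset of `D(s)`
by finite linear combinations of heat polynomials. -/
theorem heatPoly_complete_system
    (T L : ℝ) (hT : 0 < T) (hL : 0 < L)
    (s : ℝ → ℝ) (hs : ContDiffOn ℝ 1 s (Set.Icc 0 T)) (hs0 : s 0 = 0)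
    (hsL : ∀ t ∈ Set.Ioc 0 T, 0 < s t ∧ s t ≤ L)
    (D : Set (ℝ × ℝ))
    (hD : D = {z : ℝ × ℝ | 0 < z.1 ∧ z.1 < s z.2 ∧ 0 < z.2 ∧ z.2 < T})
    (u : ℝ × ℝ → ℝ)
    (hdx : ∀ z ∈ D, DifferentiableAt ℝ (fun y => u (y, z.2)) z.1)
    (hdxx : ∀ z ∈ D, DifferentiableAt ℝ (fun y => deriv (fun y' => u (y', z.2)) y) z.1)
    (hdt : ∀ z ∈ D, DifferentiableAt ℝ (fun t => u (z.1, t)) z.2)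
    (hcx : ContinuousOn (fun z : ℝ × ℝ => deriv (fun y => u (y, z.2)) z.1) D)
    (hcxx : ContinuousOn
      (fun z : ℝ × ℝ => deriv (fun y => deriv (fun y' => u (y', z.2)) y) z.1) D)
    (hheat : ∀ z ∈ D,
      deriv (fun y => deriv (fun y' => u (y', z.2)) y) z.1
        = deriv (fun t => u (z.1, t)) z.2)
    (K : Set (ℝ × ℝ)) (hK : IsCompact K) (hKD : K ⊆ D)
    (ε : ℝ) (hε : 0 < ε) :
    ∃ (N : ℕ) (a : ℕ → ℝ), ∀ z ∈ K,
      |u z - ∑ n ∈ Finset.range (N + 1), a n * heatPoly n z.1 z.2| < ε := by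
  subst hD
  exact heatPoly_complete_system_general
    (HeatPolynomial.isOpen_regionUnderGraph hs.continuousOn)
    (HeatPolynomial.horizontallyConvex_regionUnderGraph s T) u hdx hdxx hdt hcx hcxx hheat hK hKD hε
end

section
/- Let T > 0, let b : [0,T] → ℝ be continuous at 0 with b(0) = 0, and let u : ℝ² → ℝ be such that u and its partial derivative u_y with respect to the first variable exist near (0,0) and are continuous at (0,0). If u(b(t),t) = 1 and u_y(b(t),t) = 0 for all t ∈ (0,T], then u(0,0) + u_y(0,0) = 1. Consequently, the boundary conditions u(b(t),t) = 1, u_y(b(t),t) = 0 and u(0,t) + u_y(0,t) = 0 for t ∈ (0,T] cannot all hold for a function u with u and u_y continuous at the origin: the boundary conditions of the finite-horizon Russian option free boundary problem are inconsistent at the point (0,0). -/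
/-!
The free boundary `t ↦ (b t, t)` and the reflecting boundary `t ↦ (0, t)` both end at the origin,
so by continuity `u + u_y` would have to take the value `1 + 0` there along the former and `0`
along the latter.
-/

open Set

theorem eq_of_continuousAt_of_forall_graph_eq {X Y Z : Type*} [TopologicalSpace X]
    [TopologicalSpace Y] [TopologicalSpace Z] [T1Space Z] {g : Y × X → Z} {b : X → Y}
    {s : Set X} {x₀ : X} {y₀ : Y} {c : Z} (hg : ContinuousAt g (y₀, x₀))
    (hb : ContinuousWithinAt b s x₀) (hb₀ : b x₀ = y₀) (hx₀ : x₀ ∈ closure s)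
    (h : ∀ x ∈ s, g (b x, x) = c) : g (y₀, x₀) = c := by
  subst hb₀
  have hgraph : ContinuousWithinAt (fun x => g (b x, x)) s x₀ :=
    hg.comp_continuousWithinAt (f := fun x => (b x, x)) (hb.prodMk continuousWithinAt_id)
  simpa only [closure_singleton, mem_singleton_iff] using
    hgraph.mem_closure (t := {c}) hx₀ h

/-- Inconsistency of the boundary conditions of the finite-horizon Russian option
free boundary problem at the origin: if `u(b(t),t) = 1` and `u_y(b(t),t) = 0` on
`(0,T]`, with `b` continuous at `0`, `b(0) = 0`, and `u`, `u_y` existing near and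
continuous at `(0,0)`, then `u(0,0) + u_y(0,0) = 1`; hence the reflection condition
`u(0,t) + u_y(0,t) = 0` on `(0,T]` cannot also hold. -/
theorem russian_boundary_conditions_inconsistent
    (T : ℝ) (hT : 0 < T) (b : ℝ → ℝ)
    (hb0 : b 0 = 0) (hbc : ContinuousWithinAt b (Set.Icc 0 T) 0)
    (u : ℝ → ℝ → ℝ)
    (hu_ex : ∀ᶠ z : ℝ × ℝ in nhds (0, 0), DifferentiableAt ℝ (fun y => u y z.2) z.1)
    (huc : ContinuousAt (fun z : ℝ × ℝ => u z.1 z.2) (0, 0))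
    (huyc : ContinuousAt (fun z : ℝ × ℝ => deriv (fun y => u y z.2) z.1) (0, 0))
    (hvm : ∀ t ∈ Set.Ioc 0 T, u (b t) t = 1)
    (hsf : ∀ t ∈ Set.Ioc 0 T, deriv (fun y => u y t) (b t) = 0) :
    u 0 0 + deriv (fun y => u y 0) 0 = 1
    ∧ ¬ (∀ t ∈ Set.Ioc 0 T, u 0 t + deriv (fun y => u y t) 0 = 0) := by
  have h0 : (0 : ℝ) ∈ closure (Ioc 0 T) := by
    rw [closure_Ioc hT.ne]
    exact left_mem_Icc.2 hT.le
  have hb : ContinuousWithinAt b (Ioc 0 T) 0 := hbc.mono Ioc_subset_Icc_self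
  have value_eq_one : u 0 0 = 1 := eq_of_continuousAt_of_forall_graph_eq huc hb hb0 h0 hvm
  have slope_eq_zero : deriv (fun y => u y 0) 0 = 0 :=
    eq_of_continuousAt_of_forall_graph_eq huyc hb hb0 h0 hsf
  have sum_eq_one : u 0 0 + deriv (fun y => u y 0) 0 = 1 := by
    rw [value_eq_one, slope_eq_zero, add_zero]
  refine ⟨sum_eq_one, fun hrefl => ?_⟩
  have sum_eq_zero : u 0 0 + deriv (fun y => u y 0) 0 = 0 :=
    eq_of_continuousAt_of_forall_graph_eq (huc.add huyc) continuousWithinAt_const rfl h0 hrefl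
  exact one_ne_zero (sum_eq_one.symm.trans sum_eq_zero)
end
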